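/- arXiv:math-ph/0308037 — 3 statements merged into one kernel-verified Lean document; each statement's English description precedes it below -/
import Mathlib

section
/- Let ρ = exp(−H₀) and ρ_X = exp(−(H₀+X)) be finite faithful weights on a separable Hilbert space H, and suppose ρ_X is nearby ρ with constant C > 1, i.e. C⁻¹ρ ≤ ρ_X ≤ Cρ in the Loewner order. Then X extends to a bounded self-adjoint operator on H with −(log C)·I ≤ X ≤ (log C)·I, so in particular ‖X‖ ≤ log C. -/
open scoped InnerProductSpace ENNReal NNReal
open MeasureTheory Metric Filter

noncomputable section

variable {H : Type*} [NormedAddCommGroup H] [InnerProductSpace ℂ H] [CompleteSpace H]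
  [TopologicalSpace.SeparableSpace H]

/-- The real power `ρ ^ t` (for `t ≥ 0`) of a positive operator `ρ`, via the continuous
functional calculus. -/
def opow (ρ : H →L[ℂ] H) (t : ℝ) : H →L[ℂ] H := cfc (fun x : ℝ => x ^ t) ρ

/-- The (real) trace of an operator, computed along the Hilbert basis `b`. -/
def trElem {ι : Type*} (b : HilbertBasis ι ℂ H) (T : H →L[ℂ] H) : ℝ :=
  ∑' i, (⟪b i, T (b i)⟫_ℂ).re

/-- `ρ` is a finite faithful weight: a positive, injective, trace-class operator
(trace-class being witnessed by summability of the diagonal in the Hilbert basis `b`). -/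
def IsFiniteWeight {ι : Type*} (b : HilbertBasis ι ℂ H) (ρ : H →L[ℂ] H) : Prop :=
  0 ≤ ρ ∧ Function.Injective (⇑ρ) ∧ Summable (fun i => (⟪b i, ρ (b i)⟫_ℂ).re)

/-- `σ` is nearby `ρ`: there is `C > 1` with `C⁻¹ ρ ≤ σ ≤ C ρ` in the Loewner order. -/
def IsNearby (σ ρ : H →L[ℂ] H) : Prop :=
  ∃ C : ℝ, 1 < C ∧ C⁻¹ • ρ ≤ σ ∧ σ ≤ C • ρ

/-- `F` is the Araki family `t ↦ ρ^t X ρ^{-t}` of `X` relative to `ρ`: a bounded holomorphic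
`B(H)`-valued extension to the disc `|t| < 1/2` of `t ↦ ρ^t X ρ^{-t}`, the latter being
expressed by `F t * ρ^t = ρ^t * X` and `ρ^t * F (-t) = X * ρ^t` for real `0 ≤ t < 1/2`. -/
def IsArakiFamily (ρ X : H →L[ℂ] H) (F : ℂ → H →L[ℂ] H) : Prop :=
  DifferentiableOn ℂ F (ball (0:ℂ) (1/2)) ∧
  (∃ M : ℝ, ∀ t ∈ ball (0:ℂ) (1/2), ‖F t‖ ≤ M) ∧
  (∀ t : ℝ, 0 ≤ t → t < 1/2 → F (t:ℂ) * opow ρ t = opow ρ t * X) ∧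
  (∀ t : ℝ, 0 ≤ t → t < 1/2 → opow ρ t * F (-(t:ℂ)) = X * opow ρ t)

/-- `X` satisfies the Araki condition for `ρ`. -/
def SatisfiesAraki (ρ X : H →L[ℂ] H) : Prop := ∃ F, IsArakiFamily ρ X F

/-- The Araki norm `‖X‖_A = sup_{|t| < 1/2} ‖ρ^t X ρ^{-t}‖`. -/
def arakiNorm (ρ X : H →L[ℂ] H) : ℝ :=
  sInf {M : ℝ | 0 ≤ M ∧ ∃ F, IsArakiFamily ρ X F ∧ ∀ t ∈ ball (0:ℂ) (1/2), ‖F t‖ ≤ M}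

/-- `σ = exp (-(H₀ + X))` where `ρ = exp (-H₀)`: the semigroup `t ↦ σ^t` is the mild
(Duhamel) solution of the semigroup `t ↦ ρ^t` perturbed by the bounded operator `-X`,
i.e. `σ^t = ρ^t - ∫_0^t ρ^{t-s} X σ^s ds` for all `t ≥ 0`. -/
def IsExpPerturbed (ρ σ X : H →L[ℂ] H) : Prop :=
  ∀ t : ℝ, 0 ≤ t →
    opow σ t = opow ρ t - ∫ s in (0:ℝ)..t, opow ρ (t - s) * X * opow σ s

/-- The truncation `x ↦ -log (x + e^{-n})` of `-log`; it increases pointwise to `-log x`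
as `n → ∞` and is operator anti-monotone. -/
def negLogTrunc (n : ℕ) (x : ℝ) : ℝ := - Real.log (x + Real.exp (-(n:ℝ)))

/-- The regularised quadratic form `⟪ξ, (-log (ρ + e^{-n})) ξ⟫` of `H₀ = -log ρ`. -/
def negLogFormSeq (ρ : H →L[ℂ] H) (ξ : H) (n : ℕ) : ℝ :=
  (⟪ξ, (cfc (negLogTrunc n) ρ) ξ⟫_ℂ).re

/-- `ξ` lies in the form domain `Q(H₀) = Dom (H₀^{1/2})` of `H₀ = -log ρ`. -/
def InFormDomain (ρ : H →L[ℂ] H) (ξ : H) : Prop :=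
  BddAbove (Set.range (negLogFormSeq ρ ξ))

/-- The value `⟪ξ, H₀ ξ⟫` of the quadratic form of `H₀ = -log ρ` (a monotone limit). -/
def negLogForm (ρ : H →L[ℂ] H) (ξ : H) : ℝ := ⨆ n, negLogFormSeq ρ ξ n

/-- The regularised quadratic form `⟪ξ, (σ + e^{-n})⁻¹ ξ⟫` of `σ⁻¹`. -/
def invFormSeq (σ : H →L[ℂ] H) (ξ : H) (n : ℕ) : ℝ :=
  (⟪ξ, (cfc (fun x : ℝ => (x + Real.exp (-(n:ℝ)))⁻¹) σ) ξ⟫_ℂ).re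

/-- The quadratic form `⟪ξ, σ⁻¹ ξ⟫ ∈ [0, ∞]` of the (possibly unbounded) inverse `σ⁻¹`
of the injective positive operator `σ`, as a monotone limit of regularisations. -/
def invForm (σ : H →L[ℂ] H) (ξ : H) : ℝ≥0∞ :=
  ⨆ n : ℕ, ENNReal.ofReal (invFormSeq σ ξ n)

/-- `S` is the relative entropy `S(ρ|σ) = Tr (ρ (log ρ - log σ))`, obtained as the limit of
the regularised quantities `Tr (ρ (log (ρ + e^{-n}) - log (σ + e^{-n})))`. -/
def IsRelativeEntropy {ι : Type*} (b : HilbertBasis ι ℂ H) (ρ σ : H →L[ℂ] H) (S : ℝ) : Prop :=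
  Tendsto (fun n : ℕ => trElem b (ρ * (cfc (negLogTrunc n) σ - cfc (negLogTrunc n) ρ)))
    atTop (nhds S)

/-- The `n`-th term of the Matsubara (Dyson/expansional) series: the integral over the
ordered simplex `0 ≤ s₁ ≤ ⋯ ≤ sₙ ≤ 1` (of volume `1/n!`) of the product
`F(s₁ - 1/2) ⋯ F(sₙ - 1/2)`, where `F t = ρ^t X ρ^{-t}`. -/
def matsubaraTerm (F : ℂ → H →L[ℂ] H) (n : ℕ) : H →L[ℂ] H :=
  ∫ s in {s : Fin n → ℝ | (∀ i, s i ∈ Set.Icc (0:ℝ) 1) ∧ Monotone s},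
    (List.ofFn fun i => F (((s i - 1/2 : ℝ) : ℂ))).prod

lemma aux_weak_limit {E : Type*} [NormedAddCommGroup E] [InnerProductSpace ℂ E] [CompleteSpace E]
    (U : Ultrafilter ℕ) (T : ℕ → E →L[ℂ] E) (c : ℝ) (hc : 0 ≤ c) (hT : ∀ n, ‖T n‖ ≤ c) :
    ∃ X : E →L[ℂ] E, ∀ v w : E,
      Tendsto (fun n => ⟪T n v, w⟫_ℂ) (U : Filter ℕ) (nhds ⟪X v, w⟫_ℂ) := by
  have hb : ∀ n v w, ‖⟪T n v, w⟫_ℂ‖ ≤ c * ‖v‖ * ‖w‖ := by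
    intro n v w
    refine (norm_inner_le_norm _ _).trans ?_
    gcongr
    exact (T n).le_of_opNorm_le (hT n) v
  have hex : ∀ v w : E, ∃ z : ℂ, ‖z‖ ≤ c * ‖v‖ * ‖w‖ ∧
      Tendsto (fun n => ⟪T n v, w⟫_ℂ) (U : Filter ℕ) (nhds z) := by
    intro v w
    have hK : IsCompact (closedBall (0:ℂ) (c * ‖v‖ * ‖w‖)) := isCompact_closedBall _ _
    obtain ⟨z, hz, hz'⟩ := hK.ultrafilter_le_nhds (U.map (fun n => ⟪T n v, w⟫_ℂ)) (by
      rw [Filter.le_principal_iff]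
      change ∀ᶠ n in (U : Filter ℕ), ⟪T n v, w⟫_ℂ ∈ closedBall (0:ℂ) (c * ‖v‖ * ‖w‖)
      exact Filter.Eventually.of_forall (fun n => by simpa using hb n v w))
    exact ⟨z, by simpa using hz, hz'⟩
  choose L hL1 hL2 using hex
  let B₀ : E →ₗ⋆[ℂ] E →ₗ[ℂ] ℂ := LinearMap.mk₂'ₛₗ (starRingEnd ℂ) (RingHom.id ℂ) L
    (fun v v' w => tendsto_nhds_unique (hL2 _ _) (by
      simpa [inner_add_left] using (hL2 v w).add (hL2 v' w)))
    (fun a v w => tendsto_nhds_unique (hL2 _ _) (by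
      simpa [inner_smul_left, mul_comm] using (hL2 v w).const_mul (starRingEnd ℂ a)))
    (fun v w w' => tendsto_nhds_unique (hL2 _ _) (by
      simpa [inner_add_right] using (hL2 v w).add (hL2 v w')))
    (fun a v w => tendsto_nhds_unique (hL2 _ _) (by
      simpa [inner_smul_right] using (hL2 v w).const_mul a))
  let B : E →L⋆[ℂ] E →L[ℂ] ℂ := B₀.mkContinuous₂ c (fun v w => hL1 v w)
  refine ⟨InnerProductSpace.continuousLinearMapOfBilin B, fun v w => ?_⟩
  rw [InnerProductSpace.continuousLinearMapOfBilin_apply]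
  exact hL2 v w

lemma aux_norm_le {E : Type*} [NormedAddCommGroup E] [InnerProductSpace ℂ E] [CompleteSpace E]
    (X : E →L[ℂ] E) (c : ℝ) (hc : 0 ≤ c) (hX : IsSelfAdjoint X)
    (h1 : (-c) • (1 : E →L[ℂ] E) ≤ X) (h2 : X ≤ c • (1 : E →L[ℂ] E)) : ‖X‖ ≤ c := by
  rw [← Algebra.algebraMap_eq_smul_one] at h1 h2
  rw [← cfc_id ℝ X]
  refine norm_cfc_le hc fun x hx => ?_
  rw [id, Real.norm_eq_abs, abs_le]
  exact ⟨(algebraMap_le_iff_le_spectrum (a := X)).1 h1 x hx,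
    (le_algebraMap_iff_spectrum_le (a := X)).1 h2 x hx⟩

lemma aux_cfc_trunc {E : Type*} [NormedAddCommGroup E] [InnerProductSpace ℂ E] [CompleteSpace E]
    (ρ : E →L[ℂ] E) (hρ : 0 ≤ ρ) (n : ℕ) :
    cfc (negLogTrunc n) ρ =
      - CFC.log (ρ + algebraMap ℝ (E →L[ℂ] E) (Real.exp (-(n:ℝ)))) := by
  have hsa : IsSelfAdjoint ρ := .of_nonneg hρ
  have hpos : ∀ x ∈ spectrum ℝ ρ, 0 < x + Real.exp (-(n:ℝ)) := fun x hx =>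
    add_pos_of_nonneg_of_pos (spectrum_nonneg_of_nonneg hρ hx) (Real.exp_pos _)
  have h1 : ρ + algebraMap ℝ (E →L[ℂ] E) (Real.exp (-(n:ℝ)))
      = cfc (fun x : ℝ => x + Real.exp (-(n:ℝ))) ρ := by
    rw [cfc_add_const _ _ _, cfc_id' ℝ ρ]
  rw [h1, CFC.log, ← cfc_comp' Real.log _ ρ ?_, ← cfc_neg]
  · rfl
  · rintro y ⟨x, hx, rfl⟩
    exact (Real.continuousAt_log (hpos x hx).ne').continuousWithinAt

lemma aux_strict {E : Type*} [NormedAddCommGroup E] [InnerProductSpace ℂ E] [CompleteSpace E]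
    (ρ : E →L[ℂ] E) (hρ : 0 ≤ ρ) (e : ℝ) (he : 0 < e) :
    IsStrictlyPositive (ρ + algebraMap ℝ (E →L[ℂ] E) e) := by
  have : IsStrictlyPositive (algebraMap ℝ (E →L[ℂ] E) e) := by
    rw [Algebra.algebraMap_eq_smul_one]
    exact IsStrictlyPositive.smul he isStrictlyPositive_one
  exact this.of_le (by simpa using hρ)

lemma aux_compare {E : Type*} [NormedAddCommGroup E] [InnerProductSpace ℂ E] [CompleteSpace E]
    (ρ σ : E →L[ℂ] E) (hρ : 0 ≤ ρ) (hσ : 0 ≤ σ) (C : ℝ) (hC : 1 < C)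
    (h : σ ≤ C • ρ) (n : ℕ) :
    cfc (negLogTrunc n) ρ ≤ cfc (negLogTrunc n) σ + (Real.log C) • (1 : E →L[ℂ] E) := by
  rw [aux_cfc_trunc ρ hρ, aux_cfc_trunc σ hσ, ← Algebra.algebraMap_eq_smul_one]
  set e := Real.exp (-(n:ℝ)) with he
  have hep : 0 < e := Real.exp_pos _
  have hle : σ + algebraMap ℝ (E →L[ℂ] E) e ≤ C • (ρ + algebraMap ℝ (E →L[ℂ] E) e) := by
    rw [smul_add]
    refine add_le_add h ?_
    rw [Algebra.algebraMap_eq_smul_one, smul_smul]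
    have : (0 : E →L[ℂ] E) ≤ (C * e - e) • (1 : E →L[ℂ] E) :=
      smul_nonneg (by nlinarith) zero_le_one
    rw [sub_smul] at this
    exact sub_nonneg.1 this
  have := CFC.log_le_log hle (aux_strict σ hσ e hep)
  rw [CFC.log_smul' _ (by linarith) (aux_strict ρ hρ e hep)] at this
  rw [neg_add_eq_sub, neg_le_sub_iff_le_add, ]
  exact this

lemma aux_mono {E : Type*} [NormedAddCommGroup E] [InnerProductSpace ℂ E] [CompleteSpace E]
    (ρ : E →L[ℂ] E) (hρ : 0 ≤ ρ) (ξ : E) : Monotone (negLogFormSeq ρ ξ) := by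
  intro m n hmn
  have hcont : ∀ k : ℕ, ContinuousOn (negLogTrunc k) (spectrum ℝ ρ) := by
    intro k x hx
    have hp : 0 < x + Real.exp (-(k:ℝ)) :=
      add_pos_of_nonneg_of_pos (spectrum_nonneg_of_nonneg hρ hx) (Real.exp_pos _)
    unfold negLogTrunc
    have hc : ContinuousAt (fun y : ℝ => y + Real.exp (-(k:ℝ))) x := by fun_prop
    exact ((hc.log hp.ne').neg).continuousWithinAt
  have h : cfc (negLogTrunc m) ρ ≤ cfc (negLogTrunc n) ρ := by
    refine cfc_mono (fun x hx => ?_) (hcont m) (hcont n)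
    have hx0 : 0 ≤ x := spectrum_nonneg_of_nonneg hρ hx
    unfold negLogTrunc
    refine neg_le_neg (Real.log_le_log (by positivity) ?_)
    gcongr
  have := ((ContinuousLinearMap.le_def _ _).1 h).re_inner_nonneg_right ξ
  simpa [negLogFormSeq, inner_sub_right] using this

lemma aux_form {E : Type*} [NormedAddCommGroup E] [InnerProductSpace ℂ E] [CompleteSpace E]
    (ρ σ : E →L[ℂ] E) (hρ : 0 ≤ ρ) (hσ : 0 ≤ σ) (C : ℝ) (hC : 1 < C)
    (h : σ ≤ C • ρ) (ξ : E) (hd : InFormDomain σ ξ) : InFormDomain ρ ξ := by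
  obtain ⟨M, hM⟩ := hd
  refine ⟨M + Real.log C * ‖ξ‖ ^ 2, ?_⟩
  rintro _ ⟨n, rfl⟩
  have h1 := hM ⟨n, rfl⟩
  have h2 := ((ContinuousLinearMap.le_def _ _).1
    (aux_compare ρ σ hρ hσ C hC h n)).re_inner_nonneg_right ξ
  have h3 : (⟪ξ, ξ⟫_ℂ).re = ‖ξ‖ ^ 2 := inner_self_eq_norm_sq (𝕜 := ℂ) ξ
  simp only [ContinuousLinearMap.sub_apply, ContinuousLinearMap.add_apply,
    ContinuousLinearMap.smul_apply, ContinuousLinearMap.one_apply, inner_sub_right,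
    inner_add_right, inner_smul_right_eq_smul, RCLike.re_to_complex, Complex.sub_re,
    Complex.add_re, Complex.real_smul, Complex.re_ofReal_mul, h3] at h2
  unfold negLogFormSeq at *
  linarith

/-- If `ρ = exp (-H₀)` and `σ = ρ_X = exp (-(H₀+X))` are finite faithful
weights and `σ` is nearby `ρ` with constant `C > 1` (`C⁻¹ ρ ≤ σ ≤ C ρ` in the Loewner
order), then the quadratic form `X` (with form domain `Dq`, the form sum relation
`-log σ = H₀ + X` being expressed by `hdom` and `hsum`) extends to a bounded
self-adjoint operator `Xop` on `H` with `-(log C) I ≤ Xop ≤ (log C) I`,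
so in particular `‖Xop‖ ≤ log C`. -/
theorem statement1 {ι : Type*} (b : HilbertBasis ι ℂ H) (ρ σ : H →L[ℂ] H)
    (hρ : IsFiniteWeight b ρ) (hσ : IsFiniteWeight b σ)
    (C : ℝ) (hC : 1 < C)
    (hlow : C⁻¹ • ρ ≤ σ) (hupp : σ ≤ C • ρ)
    (q : H → ℝ) (Dq : Set H)
    (hdom : ∀ ξ : H, InFormDomain σ ξ ↔ (InFormDomain ρ ξ ∧ ξ ∈ Dq))
    (hsum : ∀ ξ : H, InFormDomain σ ξ → negLogForm σ ξ = negLogForm ρ ξ + q ξ) :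
    ∃ Xop : H →L[ℂ] H, IsSelfAdjoint Xop ∧
      (∀ ξ : H, InFormDomain ρ ξ → (⟪ξ, Xop ξ⟫_ℂ).re = q ξ) ∧
      (-(Real.log C)) • (1 : H →L[ℂ] H) ≤ Xop ∧
      Xop ≤ (Real.log C) • (1 : H →L[ℂ] H) ∧
      ‖Xop‖ ≤ Real.log C := by
  have hρ0 := hρ.1
  have hσ0 := hσ.1
  have hC0 : 0 < C := by linarith
  have hc : 0 ≤ Real.log C := (Real.log_pos hC).le
  have hlow' : ρ ≤ C • σ := by
    have := smul_le_smul_of_nonneg_left hlow hC0.le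
    rwa [smul_smul, mul_inv_cancel₀ hC0.ne', one_smul] at this
  let T : ℕ → H →L[ℂ] H := fun n => cfc (negLogTrunc n) σ - cfc (negLogTrunc n) ρ
  have hTsa : ∀ n, IsSelfAdjoint (T n) := fun n =>
    (cfc_predicate (negLogTrunc n) σ).sub (cfc_predicate (negLogTrunc n) ρ)
  have hT1 : ∀ n, (-(Real.log C)) • (1 : H →L[ℂ] H) ≤ T n := fun n => by
    have := aux_compare ρ σ hρ0 hσ0 C hC hupp n
    rw [neg_smul, le_sub_iff_add_le, neg_add_le_iff_le_add, add_comm]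
    exact this
  have hT2 : ∀ n, T n ≤ (Real.log C) • (1 : H →L[ℂ] H) := fun n => by
    have := aux_compare σ ρ hσ0 hρ0 C hC hlow' n
    rw [sub_le_iff_le_add, add_comm]
    exact this
  have hTn : ∀ n, ‖T n‖ ≤ Real.log C := fun n =>
    aux_norm_le (T n) _ hc (hTsa n) (hT1 n) (hT2 n)
  let U : Ultrafilter ℕ := Ultrafilter.of atTop
  have hU : (U : Filter ℕ) ≤ atTop := Ultrafilter.of_le atTop
  obtain ⟨X, hX⟩ := aux_weak_limit U T _ hc hTn
  have hsymm : ∀ v w, ⟪X v, w⟫_ℂ = ⟪v, X w⟫_ℂ := by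
    intro v w
    refine tendsto_nhds_unique (hX v w) ?_
    have h1 := (Complex.continuous_conj.tendsto _).comp (hX w v)
    rw [inner_conj_symm] at h1
    refine h1.congr fun n => ?_
    have h2 : ⟪T n v, w⟫_ℂ = ⟪v, T n w⟫_ℂ := (hTsa n).isSymmetric v w
    rw [h2]
    exact inner_conj_symm _ _
  have hXsa : IsSelfAdjoint X := by
    rw [ContinuousLinearMap.isSelfAdjoint_iff_isSymmetric]
    exact hsymm
  have hXre : ∀ v, Tendsto (fun n => (⟪v, T n v⟫_ℂ).re) (U : Filter ℕ)
      (nhds (⟪v, X v⟫_ℂ).re) := by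
    intro v
    have h1 := (Complex.continuous_re.tendsto _).comp (hX v v)
    rw [hsymm] at h1
    refine h1.congr fun n => ?_
    exact congrArg Complex.re ((hTsa n).isSymmetric v v)
  have hone : ∀ a : ℝ, IsSelfAdjoint (a • (1 : H →L[ℂ] H)) := fun a =>
    (IsSelfAdjoint.all a).smul (.one _)
  have hX1 : (-(Real.log C)) • (1 : H →L[ℂ] H) ≤ X := by
    rw [ContinuousLinearMap.le_def, ContinuousLinearMap.isPositive_def']
    refine ⟨hXsa.sub (hone _), fun v => ?_⟩
    rw [ContinuousLinearMap.reApplyInnerSelf_apply, ← inner_re_symm,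
      ContinuousLinearMap.sub_apply, inner_sub_right, map_sub, sub_nonneg]
    refine ge_of_tendsto (hXre v) (Eventually.of_forall fun n => ?_)
    have := ((ContinuousLinearMap.le_def _ _).1 (hT1 n)).re_inner_nonneg_right v
    rwa [ContinuousLinearMap.sub_apply, inner_sub_right, map_sub, sub_nonneg] at this
  have hX2 : X ≤ (Real.log C) • (1 : H →L[ℂ] H) := by
    rw [ContinuousLinearMap.le_def, ContinuousLinearMap.isPositive_def']
    refine ⟨(hone _).sub hXsa, fun v => ?_⟩
    rw [ContinuousLinearMap.reApplyInnerSelf_apply, ← inner_re_symm,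
      ContinuousLinearMap.sub_apply, inner_sub_right, map_sub, sub_nonneg]
    refine le_of_tendsto (hXre v) (Eventually.of_forall fun n => ?_)
    have := ((ContinuousLinearMap.le_def _ _).1 (hT2 n)).re_inner_nonneg_right v
    rwa [ContinuousLinearMap.sub_apply, inner_sub_right, map_sub, sub_nonneg] at this
  refine ⟨X, hXsa, fun ξ hξ => ?_, hX1, hX2, aux_norm_le X _ hc hXsa hX1 hX2⟩
  have hξσ : InFormDomain σ ξ := aux_form σ ρ hσ0 hρ0 C hC hlow' ξ hξ
  have t1 := tendsto_atTop_ciSup (aux_mono ρ hρ0 ξ) hξ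
  have t2 := tendsto_atTop_ciSup (aux_mono σ hσ0 ξ) hξσ
  have t3 : Tendsto (fun n => negLogFormSeq σ ξ n - negLogFormSeq ρ ξ n) atTop
      (nhds (negLogForm σ ξ - negLogForm ρ ξ)) := t2.sub t1
  have hq : negLogForm σ ξ - negLogForm ρ ξ = q ξ := by
    rw [hsum ξ hξσ]; ring
  rw [hq] at t3
  refine tendsto_nhds_unique (hXre ξ) ((t3.mono_left hU).congr fun n => ?_)
  simp [T, negLogFormSeq, inner_sub_right]
end
end

section
/- Let ρ = exp(−H₀) and ρ_X = exp(−(H₀+X)) be finite faithful weights on a separable Hilbert space H with X a bounded operator satisfying the Araki condition for ρ, and set M = ‖X‖_A = sup_{|t|<1/2} ‖ρ^t X ρ^{−t}‖. Then the Matsubara (Dyson/expansional) series for ρ^{−1/2} ρ_X ρ^{−1/2}, whose n-th term is (1/n!)∫ over the simplex {α₁+…+α_{n+1}=1, αᵢ ≥ 0} of (ρ^{α₁−1/2}Xρ^{1/2−α₁})(ρ^{α₁+α₂−1/2}Xρ^{1/2−α₁−α₂})⋯(ρ^{1/2−α_{n+1}}Xρ^{α_{n+1}−1/2}), converges in operator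 norm (each n-th term having norm at most M^n/n!), and its sum satisfies ρ^{−1/2} ρ_X ρ^{−1/2} ≤ e^M · I; consequently ρ_X ≤ e^M ρ in the Loewner order. -/
open scoped InnerProductSpace ENNReal NNReal
open MeasureTheory Metric Filter

noncomputable section

variable {H : Type*} [NormedAddCommGroup H] [InnerProductSpace ℂ H] [CompleteSpace H]
  [TopologicalSpace.SeparableSpace H]

set_option linter.unusedSectionVars false

section A
variable {A : Type*} [NormedRing A] [NormedAlgebra ℝ A] [CompleteSpace A]

def simplexSet (n : ℕ) (t : ℝ) : Set (Fin n → ℝ) :=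
  {s : Fin n → ℝ | (∀ i, s i ∈ Set.Icc (0:ℝ) t) ∧ Monotone s}

lemma measurableSet_simplexSet (n : ℕ) (t : ℝ) : MeasurableSet (simplexSet n t) := by
  have h : IsClosed (simplexSet n t) := by
    unfold simplexSet Monotone
    simp only [Set.ofPred_and, Set.ofPred_forall]
    refine IsClosed.inter (isClosed_iInter fun i => isClosed_Icc.preimage (continuous_apply i)) ?_
    refine isClosed_iInter fun i => isClosed_iInter fun j => isClosed_iInter fun _ => ?_
    exact isClosed_le (continuous_apply i) (continuous_apply j)
  exact h.measurableSet

lemma volume_simplexSet_lt (n : ℕ) (t : ℝ) : volume (simplexSet n t) < ⊤ := by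
  have h : simplexSet n t ⊆ Set.Icc (fun _ => 0) (fun _ => t) := by
    intro s hs
    exact ⟨fun i => (hs.1 i).1, fun i => (hs.1 i).2⟩
  exact (measure_mono h).trans_lt isCompact_Icc.measure_lt_top

def simplexProd (G : ℝ → A) (n : ℕ) (s : Fin n → ℝ) : A := (List.ofFn fun i => G (s i)).prod

lemma norm_simplexProd_le (h1 : ‖(1:A)‖ ≤ 1) (G : ℝ → A) (M : ℝ) (hM : ∀ s, ‖G s‖ ≤ M) (n : ℕ)
    (s : Fin n → ℝ) : ‖simplexProd G n s‖ ≤ M ^ n := by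
  have hM0 : 0 ≤ M := (norm_nonneg _).trans (hM 0)
  induction n with
  | zero => simpa [simplexProd] using h1
  | succ n ih =>
    have := ih (fun i => s i.succ)
    simp only [simplexProd, List.ofFn_succ, List.prod_cons] at this ⊢
    calc _ ≤ _ := norm_mul_le _ _
      _ ≤ M * M ^ n := mul_le_mul (hM _) this (norm_nonneg _) hM0
      _ = _ := by ring

lemma aesm_simplexProd (G : ℝ → A) (hG : AEStronglyMeasurable G volume) (n : ℕ) :
    AEStronglyMeasurable (simplexProd G n) volume := by
  unfold simplexProd
  have : ∀ i : Fin n, AEStronglyMeasurable (fun s : Fin n → ℝ => G (s i)) volume := fun i =>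
    hG.comp_quasiMeasurePreserving (Measure.quasiMeasurePreserving_eval (fun _ => volume) i)
  have h2 := List.aestronglyMeasurable_fun_prod (μ := (volume : Measure (Fin n → ℝ)))
    (List.ofFn fun (i : Fin n) (s : Fin n → ℝ) => G (s i)) (by
      intro f hf
      obtain ⟨i, rfl⟩ := List.mem_ofFn.1 hf
      exact this i)
  simpa [List.map_ofFn, Function.comp_def] using h2

def simplexInt (G : ℝ → A) (n : ℕ) (t : ℝ) : A := ∫ s in simplexSet n t, simplexProd G n s

lemma integrable_simplex (h1 : ‖(1:A)‖ ≤ 1) (G : ℝ → A) (hG : AEStronglyMeasurable G volume)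
    (M : ℝ) (hM : ∀ s, ‖G s‖ ≤ M) (n : ℕ) (t : ℝ) :
    IntegrableOn (simplexProd G n) (simplexSet n t) := by
  refine Measure.integrableOn_of_bounded (volume_simplexSet_lt n t).ne (aesm_simplexProd G hG n)
    (M := M ^ n) (Eventually.of_forall fun s => norm_simplexProd_le h1 G M hM n s)

lemma simplexInt_succ (h1 : ‖(1:A)‖ ≤ 1) (G : ℝ → A) (hG : AEStronglyMeasurable G volume)
    (M : ℝ) (hM : ∀ s, ‖G s‖ ≤ M) (n : ℕ) (t : ℝ) (ht : 0 ≤ t) :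
    simplexInt G (n+1) t = ∫ s in (0:ℝ)..t, simplexInt G n s * G s := by
  have hmp := (volume_preserving_piFinSuccAbove (fun _ : Fin (n+1) => ℝ) (Fin.last n)).symm
  have hIntg := (integrable_simplex h1 G hG M hM (n+1) t).integrable_indicator
    (measurableSet_simplexSet (n+1) t)
  have hIntg' := (hmp.integrable_comp_emb (g := (simplexSet (n+1) t).indicator (simplexProd G (n+1))) (MeasurableEquiv.measurableEmbedding _)).2 hIntg
  have hval : ∀ (x : ℝ) (s : Fin n → ℝ),
      (simplexSet (n+1) t).indicator (simplexProd G (n+1))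
        ((MeasurableEquiv.piFinSuccAbove (fun _ : Fin (n+1) => ℝ) (Fin.last n)).symm (x, s))
      = (Set.Icc 0 t).indicator (fun x => (simplexSet n x).indicator (fun s => simplexProd G n s * G x) s) x := by
    intro x s
    have he : (MeasurableEquiv.piFinSuccAbove (fun _ : Fin (n+1) => ℝ) (Fin.last n)).symm (x, s)
      = Fin.snoc (α := fun _ => ℝ) s x := by
      simp [MeasurableEquiv.piFinSuccAbove, Fin.insertNthEquiv]
    rw [he]
    have hmem : Fin.snoc (α := fun _ => ℝ) s x ∈ simplexSet (n+1) t ↔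
        x ∈ Set.Icc 0 t ∧ s ∈ simplexSet n x := by
      constructor
      · rintro ⟨ha, hb⟩
        have hx := ha (Fin.last n)
        simp only [Fin.snoc_last] at hx
        refine ⟨hx, ⟨fun i => ⟨?_, ?_⟩, ?_⟩⟩
        · have := ha i.castSucc
          simp only [Fin.snoc_castSucc] at this
          exact this.1
        · have := hb (Fin.le_last i.castSucc)
          simpa only [Fin.snoc_castSucc, Fin.snoc_last] using this
        · intro i j hij
          have := hb (Fin.castSucc_le_castSucc_iff.2 hij)
          simpa only [Fin.snoc_castSucc] using this
      · rintro ⟨hx, ⟨ha, hb⟩⟩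
        refine ⟨fun i => ?_, fun i j hij => ?_⟩
        · refine Fin.lastCases ?_ (fun i => ?_) i
          · simpa using hx
          · simpa using ⟨(ha i).1, (ha i).2.trans hx.2⟩
        · induction j using Fin.lastCases with
          | last =>
            induction i using Fin.lastCases with
            | last => exact le_rfl
            | cast i => simpa using (ha i).2
          | cast j =>
            induction i using Fin.lastCases with
            | last => exact absurd hij (not_le.2 (Fin.castSucc_lt_last j))
            | cast i => simpa using hb (Fin.castSucc_le_castSucc_iff.1 hij)
    have hprod : simplexProd G (n+1) (Fin.snoc (α := fun _ => ℝ) s x) = simplexProd G n s * G x := by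
      unfold simplexProd
      rw [List.ofFn_succ']
      simp [-List.ofFn_succ, List.concat_eq_append]
    by_cases hx : x ∈ Set.Icc 0 t
    · by_cases hs : s ∈ simplexSet n x
      · rw [Set.indicator_of_mem (hmem.2 ⟨hx, hs⟩), Set.indicator_of_mem hx,
          Set.indicator_of_mem hs, hprod]
      · rw [Set.indicator_of_notMem (fun h => hs (hmem.1 h).2), Set.indicator_of_mem hx,
          Set.indicator_of_notMem hs]
    · rw [Set.indicator_of_notMem (fun h => hx (hmem.1 h).1), Set.indicator_of_notMem hx]
  unfold simplexInt
  rw [← integral_indicator (measurableSet_simplexSet (n+1) t),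
    ← hmp.integral_comp (MeasurableEquiv.measurableEmbedding _), Measure.volume_eq_prod,
    integral_prod _ (by exact hIntg'), intervalIntegral.integral_of_le ht, ← integral_Icc_eq_integral_Ioc,
    ← integral_indicator measurableSet_Icc]
  congr 1
  ext x
  simp_rw [hval]
  by_cases hx : x ∈ Set.Icc 0 t
  · simp only [Set.indicator_of_mem hx]
    rw [integral_indicator (measurableSet_simplexSet n x)]
    exact integral_mul_const_of_integrable (integrable_simplex h1 G hG M hM n x)
  · simp only [Set.indicator_of_notMem hx, integral_zero]

def dysonJ (G : ℝ → A) : ℕ → ℝ → A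
  | 0 => fun _ => 1
  | n+1 => fun t => ∫ s in (0:ℝ)..t, dysonJ G n s * G s

lemma simplexInt_eq_dysonJ (h1 : ‖(1:A)‖ ≤ 1) (G : ℝ → A) (hG : AEStronglyMeasurable G volume)
    (M : ℝ) (hM : ∀ s, ‖G s‖ ≤ M) (n : ℕ) : ∀ (t : ℝ) (_ : 0 ≤ t),
    simplexInt G n t = dysonJ G n t := by
  induction n with
  | zero =>
    intro t ht
    have : simplexSet 0 t = Set.univ := by
      ext s; simp [simplexSet, Subsingleton.monotone]
    simp [simplexInt, dysonJ, this, simplexProd, Measure.real, volume_pi]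
  | succ n ih =>
    intro t ht
    rw [simplexInt_succ h1 G hG M hM n t ht]
    refine intervalIntegral.integral_congr fun s hs => ?_
    rw [Set.uIcc_of_le ht] at hs
    simp only [ih s hs.1]

lemma intervalIntegrable_cont_mul (G : ℝ → A) (hG : AEStronglyMeasurable G volume)
    (M : ℝ) (hM : ∀ s, ‖G s‖ ≤ M) (f : ℝ → A) (hf : Continuous f) (a b : ℝ) :
    IntervalIntegrable (fun s => f s * G s) volume a b := by
  have hGi : IntervalIntegrable G volume a b := by
    refine (intervalIntegrable_const (c := M)).mono_fun hG.restrict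
      (Eventually.of_forall fun s => (hM s).trans (le_abs_self M))
  exact hGi.continuousOn_mul hf.continuousOn

lemma continuous_dysonJ (G : ℝ → A) (hG : AEStronglyMeasurable G volume)
    (M : ℝ) (hM : ∀ s, ‖G s‖ ≤ M) (n : ℕ) : Continuous (dysonJ G n) := by
  induction n with
  | zero => exact continuous_const
  | succ n ih =>
    exact intervalIntegral.continuous_primitive
      (fun a b => intervalIntegrable_cont_mul G hG M hM _ ih a b) 0

lemma norm_dysonJ_le (h1 : ‖(1:A)‖ ≤ 1) (G : ℝ → A)
    (M : ℝ) (hM : ∀ s, ‖G s‖ ≤ M) (n : ℕ) : ∀ (t : ℝ) (_ : 0 ≤ t),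
    ‖dysonJ G n t‖ ≤ (M * t) ^ n / n.factorial := by
  have hM0 : 0 ≤ M := (norm_nonneg _).trans (hM 0)
  induction n with
  | zero => intro t ht; simpa [dysonJ] using h1
  | succ n ih =>
    intro t ht
    have : ‖∫ s in (0:ℝ)..t, dysonJ G n s * G s‖ ≤
        ∫ s in (0:ℝ)..t, (M * s) ^ n / n.factorial * M := by
      refine intervalIntegral.norm_integral_le_of_norm_le ht (Eventually.of_forall ?_) ?_
      · intro s hs
        refine (norm_mul_le _ _).trans ?_
        have := ih s hs.1.le
        exact mul_le_mul this (hM s) (norm_nonneg _) ((norm_nonneg _).trans this)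
      · exact Continuous.intervalIntegrable (by fun_prop) _ _
    refine this.trans_eq ?_
    have e : (fun s : ℝ => (M * s) ^ n / n.factorial * M) =
      fun s : ℝ => (M ^ (n+1) / n.factorial) * s ^ n := by
      ext s; ring
    rw [e, intervalIntegral.integral_const_mul, integral_pow, Nat.factorial_succ]
    push_cast
    have := Nat.factorial_ne_zero n
    field_simp
    ring

def dysonU (G : ℝ → A) (t : ℝ) : A := ∑' n : ℕ, ((-1:ℝ) ^ n) • dysonJ G n t

lemma summable_dysonU (h1 : ‖(1:A)‖ ≤ 1) (G : ℝ → A)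
    (M : ℝ) (hM : ∀ s, ‖G s‖ ≤ M) (t : ℝ) (ht : 0 ≤ t) :
    Summable fun n : ℕ => ((-1:ℝ) ^ n) • dysonJ G n t := by
  refine Summable.of_norm_bounded (Real.summable_pow_div_factorial (M * t)) fun n => ?_
  rw [norm_smul]; simpa using norm_dysonJ_le h1 G M hM n t ht

lemma dysonU_eq (h1 : ‖(1:A)‖ ≤ 1) (G : ℝ → A) (hG : AEStronglyMeasurable G volume)
    (M : ℝ) (hM : ∀ s, ‖G s‖ ≤ M) (t : ℝ) (ht : 0 ≤ t) :
    dysonU G t = 1 - ∫ s in (0:ℝ)..t, dysonU G s * G s := by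
  have hM0 : 0 ≤ M := (norm_nonneg _).trans (hM 0)
  have key : HasSum (fun n : ℕ => ∫ s in (0:ℝ)..t, (((-1:ℝ) ^ n) • dysonJ G n s) * G s)
      (∫ s in (0:ℝ)..t, dysonU G s * G s) := by
    refine intervalIntegral.hasSum_integral_of_dominated_convergence
      (fun n _ => (M * t) ^ n / n.factorial * M) ?_ ?_ ?_ ?_ ?_
    · intro n
      exact (intervalIntegrable_cont_mul G hG M hM _
        ((continuous_dysonJ G hG M hM n).const_smul ((-1:ℝ)^n)) 0 t).def'.aestronglyMeasurable
    · intro n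
      refine Eventually.of_forall fun s hs => ?_
      rw [Set.uIoc_of_le ht] at hs
      refine (norm_mul_le _ _).trans ?_
      refine mul_le_mul ?_ (hM s) (norm_nonneg _) (by positivity)
      rw [norm_smul]
      simp only [norm_pow, norm_neg, norm_one, one_pow, one_mul]
      refine (norm_dysonJ_le h1 G M hM n s hs.1.le).trans ?_
      have := hs.1.le
      have := hs.2
      gcongr
    · exact Eventually.of_forall fun s hs => (Real.summable_pow_div_factorial (M * t)).mul_right M
    · exact intervalIntegrable_const
    · refine Eventually.of_forall fun s hs => ?_
      rw [Set.uIoc_of_le ht] at hs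
      exact (summable_dysonU h1 G M hM s hs.1.le).hasSum.mul_right _
  have e : ∀ n : ℕ, ∫ s in (0:ℝ)..t, (((-1:ℝ) ^ n) • dysonJ G n s) * G s =
      - (((-1:ℝ) ^ (n+1)) • dysonJ G (n+1) t) := by
    intro n
    simp only [smul_mul_assoc, dysonJ, pow_succ]
    rw [intervalIntegral.integral_smul]
    simp
  simp_rw [e] at key
  unfold dysonU at key ⊢
  rw [(summable_dysonU h1 G M hM t ht).tsum_eq_zero_add, ← key.tsum_eq, tsum_neg]
  simp [dysonJ]

lemma continuousOn_dysonU (h1 : ‖(1:A)‖ ≤ 1) (G : ℝ → A) (hG : AEStronglyMeasurable G volume)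
    (M : ℝ) (hM : ∀ s, ‖G s‖ ≤ M) (T : ℝ) : ContinuousOn (dysonU G) (Set.Icc 0 T) := by
  have hM0 : 0 ≤ M := (norm_nonneg _).trans (hM 0)
  refine continuousOn_tsum (fun n => ?_) (Real.summable_pow_div_factorial (M * T)) ?_
  · exact ((continuous_dysonJ G hG M hM n).const_smul ((-1:ℝ)^n)).continuousOn
  · intro n s hs
    rw [norm_smul]
    simp only [norm_pow, norm_neg, norm_one, one_pow, one_mul]
    refine (norm_dysonJ_le h1 G M hM n s hs.1).trans ?_
    have := hs.1
    have := hs.2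
    gcongr

lemma volterra_zero {E : Type*} [NormedAddCommGroup E] [NormedSpace ℝ E] (D : ℝ → E)
    (a b B C : ℝ) (hC : 0 ≤ C) (hB : ∀ t ∈ Set.Icc a b, ‖D t‖ ≤ B)
    (h : ∀ t ∈ Set.Icc a b, ∃ k : ℝ → E, D t = (∫ s in a..t, k s) ∧
      ∀ s ∈ Set.Ioo a t, ‖k s‖ ≤ C * ‖D s‖) :
    ∀ t ∈ Set.Icc a b, D t = 0 := by
  have key : ∀ n : ℕ, ∀ t ∈ Set.Icc a b, ‖D t‖ ≤ B * ((C * (t - a)) ^ n / n.factorial) := by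
    intro n
    induction n with
    | zero => intro t ht; simpa using hB t ht
    | succ n ih =>
      intro t ht
      obtain ⟨k, hk, hk2⟩ := h t ht
      rw [hk]
      have hne : ∀ᵐ s : ℝ, s ≠ t := by
        simp [ae_iff]
      have : ‖∫ s in a..t, k s‖ ≤
          ∫ s in a..t, C * (B * ((C * (s - a)) ^ n / n.factorial)) := by
        refine intervalIntegral.norm_integral_le_of_norm_le ht.1 ?_ ?_
        · filter_upwards [hne] with s hst hs
          have hs' : s < t := lt_of_le_of_ne hs.2 hst
          refine (hk2 s ⟨hs.1, hs'⟩).trans ?_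
          exact mul_le_mul_of_nonneg_left (ih s ⟨hs.1.le, hs'.le.trans ht.2⟩) hC
        · exact Continuous.intervalIntegrable (by fun_prop) _ _
      refine this.trans_eq ?_
      have e : (fun s : ℝ => C * (B * ((C * (s - a)) ^ n / n.factorial))) =
        fun s : ℝ => (B * C ^ (n+1) / n.factorial) * (s - a) ^ n := by
        ext s; rw [mul_pow]; ring
      rw [e, intervalIntegral.integral_const_mul,
        intervalIntegral.integral_comp_sub_right (fun x => x ^ n), integral_pow,
        Nat.factorial_succ, mul_pow]
      push_cast
      have := Nat.factorial_ne_zero n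
      field_simp
      ring
  intro t ht
  have lim : Tendsto (fun n : ℕ => B * ((C * (t - a)) ^ n / n.factorial)) atTop (nhds (B * 0)) :=
    (FloorSemiring.tendsto_pow_div_factorial_atTop _).const_mul B
  rw [mul_zero] at lim
  have := ge_of_tendsto' lim (fun n => key n t ht)
  exact norm_le_zero_iff.1 this
end A


section B

lemma spec_nonneg {ρ : H →L[ℂ] H} (hρ : 0 ≤ ρ) {x : ℝ} (hx : x ∈ spectrum ℝ ρ) : 0 ≤ x :=
  spectrum_nonneg_of_nonneg hρ hx

lemma opow_zero {ρ : H →L[ℂ] H} (hρ : 0 ≤ ρ) : opow ρ 0 = 1 := by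
  have : IsSelfAdjoint ρ := IsSelfAdjoint.of_nonneg hρ
  unfold opow
  simp only [Real.rpow_zero]
  exact cfc_const_one ℝ ρ

lemma opow_one {ρ : H →L[ℂ] H} (hρ : 0 ≤ ρ) : opow ρ 1 = ρ := by
  have : IsSelfAdjoint ρ := IsSelfAdjoint.of_nonneg hρ
  unfold opow
  simp only [Real.rpow_one]
  exact cfc_id' ℝ ρ

lemma opow_mul {ρ : H →L[ℂ] H} (hρ : 0 ≤ ρ) {a b : ℝ} (ha : 0 ≤ a) (hb : 0 ≤ b) :
    opow ρ a * opow ρ b = opow ρ (a + b) := by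
  unfold opow
  rw [← cfc_mul _ _ ρ (Real.continuous_rpow_const ha).continuousOn
    (Real.continuous_rpow_const hb).continuousOn]
  refine cfc_congr fun x hx => ?_
  exact (Real.rpow_add_of_nonneg (spec_nonneg hρ hx) ha hb).symm

lemma star_opow (ρ : H →L[ℂ] H) (a : ℝ) : star (opow ρ a) = opow ρ a := by
  have : IsSelfAdjoint (opow ρ a) := cfc_predicate _ ρ
  exact this.star_eq

lemma norm_opow_le {ρ : H →L[ℂ] H} (hρ : 0 ≤ ρ) {a : ℝ} (ha : 0 ≤ a) (ha1 : a ≤ 1) :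
    ‖opow ρ a‖ ≤ 1 + ‖ρ‖ := by
  refine norm_cfc_le (by positivity) fun x hx => ?_
  have h0 := spec_nonneg hρ hx
  rw [Real.norm_of_nonneg (Real.rpow_nonneg h0 a)]
  have hx1 : x ≤ ‖ρ‖ := by
    have : Nontrivial (H →L[ℂ] H) := by
      by_contra hn
      rw [not_nontrivial_iff_subsingleton] at hn
      simp at hx
    exact (Real.le_norm_self x).trans (spectrum.norm_le_norm_of_mem hx)
  calc x ^ a ≤ (1 + ‖ρ‖) ^ a := Real.rpow_le_rpow h0 (by linarith) ha
    _ ≤ (1 + ‖ρ‖) ^ (1:ℝ) := Real.rpow_le_rpow_of_exponent_le (by linarith [norm_nonneg ρ]) ha1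
    _ = _ := Real.rpow_one _

lemma continuousOn_opow (ρ : H →L[ℂ] H) :
    ContinuousOn (opow ρ) (Set.Ioi 0) := by
  intro t ht
  have ht : 0 < t := ht
  refine ContinuousAt.continuousWithinAt ?_
  refine continuousAt_cfc_fun (f := fun t x => x ^ t) (a := ρ) ?_ ?_
  · have hU : Set.Icc (t/2) (t+1) ∈ nhds t := Icc_mem_nhds (by linarith) (by linarith)
    rw [← nhdsWithin_eq_nhds.2 hU]
    refine UniformContinuousOn.tendstoUniformlyOn (U := Set.Icc (t/2) (t+1)) ?_
      (mem_of_mem_nhds hU)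
    refine IsCompact.uniformContinuousOn_of_continuous
      (isCompact_Icc.prod (spectrum.isCompact ρ)) ?_
    rintro ⟨s, x⟩ ⟨hs, hx⟩
    have : ContinuousAt (fun p : ℝ × ℝ => p.1 ^ p.2) (x, s) :=
      Real.continuousAt_rpow _ (Or.inr (by have := hs.1; simp only at this ⊢; linarith))
    exact (ContinuousAt.comp (f := fun p : ℝ × ℝ => (p.2, p.1)) (x := (s, x)) this
      (by fun_prop)).continuousWithinAt
  · filter_upwards [Ioi_mem_nhds ht] with s hs
    exact (Real.continuous_rpow_const (le_of_lt hs)).continuousOn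

lemma intervalIntegrable_of_Ioo {A : Type*} [NormedRing A] (f : ℝ → A) (a b C : ℝ) (hab : a ≤ b)
    (hf : ContinuousOn f (Set.Ioo a b)) (hC : ∀ s ∈ Set.Ioo a b, ‖f s‖ ≤ C) :
    IntervalIntegrable f volume a b := by
  rw [intervalIntegrable_iff_integrableOn_Ioo_of_le hab]
  refine IntegrableOn.of_bound (by simp) (hf.aestronglyMeasurable measurableSet_Ioo) C ?_
  exact (ae_restrict_iff' measurableSet_Ioo).2 (Eventually.of_forall hC)

lemma integrable_duhamel {ρ σ : H →L[ℂ] H} (hρ : 0 ≤ ρ) (hσ : 0 ≤ σ) (X : H →L[ℂ] H) (t : ℝ)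
    (ht : 0 ≤ t) (ht1 : t ≤ 1) :
    IntervalIntegrable (fun s => opow σ s * X * opow ρ (t - s)) volume 0 t := by
  refine intervalIntegrable_of_Ioo _ 0 t ((1 + ‖σ‖) * ‖X‖ * (1 + ‖ρ‖)) ht ?_ ?_
  · refine ContinuousOn.mul (ContinuousOn.mul ?_ continuousOn_const) ?_
    · exact (continuousOn_opow σ).mono fun s hs => hs.1
    · exact (continuousOn_opow ρ).comp (f := fun s => t - s) (by fun_prop)
        fun s hs => by simpa using hs.2
  · intro s hs
    refine (norm_mul_le _ _).trans (mul_le_mul ((norm_mul_le _ _).trans ?_)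
      (norm_opow_le hρ (by linarith [hs.2]) (by linarith [hs.1])) (norm_nonneg _) (by positivity))
    exact mul_le_mul_of_nonneg_right (norm_opow_le hσ hs.1.le (by linarith [hs.2])) (norm_nonneg _)

lemma duhamel_adj {ρ σ X : H →L[ℂ] H} (hX : IsSelfAdjoint X) (h : IsExpPerturbed ρ σ X) (t : ℝ)
    (ht : 0 ≤ t) :
    opow σ t = opow ρ t - ∫ s in (0:ℝ)..t, opow σ s * X * opow ρ (t - s) := by
  have h1 := congrArg star (h t ht)
  rw [star_sub, star_opow, star_opow] at h1
  rw [h1]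
  congr 1
  rw [intervalIntegral.integral_of_le ht, intervalIntegral.integral_of_le ht]
  have := (starL' ℝ : (H →L[ℂ] H) ≃L[ℝ] (H →L[ℂ] H)).integral_comp_comm
    (fun s => opow ρ (t - s) * X * opow σ s) (μ := volume.restrict (Set.Ioc 0 t))
  simp only [starL'_apply] at this
  rw [← this]
  refine integral_congr_ae (Eventually.of_forall fun s => ?_)
  simp only [star_mul, star_opow, hX.star_eq, mul_assoc]

lemma ii_mul_const {A : Type*} [NormedRing A] [NormedAlgebra ℝ A] [CompleteSpace A]
    {f : ℝ → A} {a b : ℝ} (hf : IntervalIntegrable f volume a b) (hab : a ≤ b) (c : A) :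
    (∫ s in a..b, f s) * c = ∫ s in a..b, f s * c := by
  rw [intervalIntegral.integral_of_le hab, intervalIntegral.integral_of_le hab]
  exact (integral_mul_const_of_integrable ((intervalIntegrable_iff_integrableOn_Ioc_of_le hab).1 hf)).symm

lemma ii_const_mul {A : Type*} [NormedRing A] [NormedAlgebra ℝ A] [CompleteSpace A]
    {f : ℝ → A} {a b : ℝ} (hf : IntervalIntegrable f volume a b) (hab : a ≤ b) (c : A) :
    c * (∫ s in a..b, f s) = ∫ s in a..b, c * f s := by
  rw [intervalIntegral.integral_of_le hab, intervalIntegral.integral_of_le hab]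
  exact (integral_const_mul_of_integrable ((intervalIntegrable_iff_integrableOn_Ioc_of_le hab).1 hf)).symm

lemma ii_congr_Ioo {A : Type*} [NormedAddCommGroup A] [NormedSpace ℝ A]
    {f g : ℝ → A} {a b : ℝ} (hab : a ≤ b) (h : ∀ s ∈ Set.Ioo a b, f s = g s) :
    ∫ s in a..b, f s = ∫ s in a..b, g s := by
  rw [intervalIntegral.integral_of_le hab, intervalIntegral.integral_of_le hab,
    integral_Ioc_eq_integral_Ioo, integral_Ioc_eq_integral_Ioo]
  exact setIntegral_congr_fun measurableSet_Ioo h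

/-- The Araki family along the shifted real segment, cut off outside the open unit interval. -/
def shiftG (F : ℂ → H →L[ℂ] H) : ℝ → H →L[ℂ] H :=
  (Set.Ioo (0:ℝ) 1).indicator fun s => F (((s - 1/2 : ℝ) : ℂ))

lemma mem_ball_of_Ioo {s : ℝ} (hs : s ∈ Set.Ioo (0:ℝ) 1) :
    (((s - 1/2 : ℝ) : ℂ)) ∈ ball (0:ℂ) (1/2) := by
  rw [mem_ball_zero_iff, Complex.norm_real, Real.norm_eq_abs, abs_lt]
  constructor <;> linarith [hs.1, hs.2]

lemma norm_shiftG_le (F : ℂ → H →L[ℂ] H) (M : ℝ) (hM : ∀ t ∈ ball (0:ℂ) (1/2), ‖F t‖ ≤ M)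
    (s : ℝ) : ‖shiftG F s‖ ≤ M := by
  unfold shiftG
  by_cases hs : s ∈ Set.Ioo (0:ℝ) 1
  · rw [Set.indicator_of_mem hs]
    exact hM _ (mem_ball_of_Ioo hs)
  · rw [Set.indicator_of_notMem hs, norm_zero]
    exact (norm_nonneg _).trans (hM 0 (by simp))

lemma aesm_shiftG (F : ℂ → H →L[ℂ] H) (hF : DifferentiableOn ℂ F (ball (0:ℂ) (1/2))) :
    AEStronglyMeasurable (shiftG F) volume := by
  unfold shiftG
  rw [aestronglyMeasurable_indicator_iff measurableSet_Ioo]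
  refine ContinuousOn.aestronglyMeasurable ?_ measurableSet_Ioo
  exact hF.continuousOn.comp (f := fun s : ℝ => ((s - 1/2 : ℝ) : ℂ)) (by fun_prop)
    fun s hs => mem_ball_of_Ioo hs

lemma matsubara_eq (F : ℂ → H →L[ℂ] H) (n : ℕ) :
    matsubaraTerm F n = simplexInt (shiftG F) n 1 := by
  unfold matsubaraTerm simplexInt
  refine setIntegral_congr_ae (measurableSet_simplexSet n 1) ?_
  have h : ∀ᵐ s : Fin n → ℝ, ∀ i, s i ≠ 0 ∧ s i ≠ 1 := by
    rw [ae_all_iff]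
    intro i
    exact (Measure.ae_eval_ne (fun _ : Fin n => (volume : Measure ℝ)) i 0).and
      (Measure.ae_eval_ne (fun _ : Fin n => (volume : Measure ℝ)) i 1)
  filter_upwards [h] with s hs hs1
  unfold simplexProd
  congr 2
  ext1 i
  have : s i ∈ Set.Ioo (0:ℝ) 1 :=
    ⟨lt_of_le_of_ne (hs1.1 i).1 (hs i).1.symm, lt_of_le_of_ne (hs1.1 i).2 (hs i).2⟩
  rw [shiftG, Set.indicator_of_mem this]

lemma main_identity {ρ σ X : H →L[ℂ] H} (hρ : 0 ≤ ρ) (hσ : 0 ≤ σ) (hX : IsSelfAdjoint X)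
    (F : ℂ → H →L[ℂ] H) (hF : IsArakiFamily ρ X F)
    (M : ℝ) (hM : ∀ t ∈ ball (0:ℂ) (1/2), ‖F t‖ ≤ M) (h : IsExpPerturbed ρ σ X) :
    opow ρ (1/2) * dysonU (shiftG F) 1 * opow ρ (1/2) = σ := by
  have h1 : ‖(1 : H →L[ℂ] H)‖ ≤ 1 := ContinuousLinearMap.norm_id_le
  have hM0 : 0 ≤ M := (norm_nonneg _).trans (hM 0 (by simp))
  have hG := aesm_shiftG F hF.1
  have hGM := norm_shiftG_le F M hM
  set G := shiftG F with hGdef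
  have hUc := continuousOn_dysonU h1 G hG M hGM 1
  obtain ⟨B, hB⟩ := isCompact_Icc.exists_bound_of_continuousOn hUc
  have hUint : ∀ a b, 0 ≤ a → a ≤ b → b ≤ 1 →
      IntervalIntegrable (fun s => dysonU G s * G s) volume a b := by
    intro a b ha hab hb
    have hGi : IntervalIntegrable G volume a b :=
      (intervalIntegrable_const (c := M)).mono_fun hG.restrict
        (Eventually.of_forall fun s => (hGM s).trans (le_abs_self M))
    refine hGi.continuousOn_mul (hUc.mono ?_)
    rw [Set.uIcc_of_le hab]
    exact Set.Icc_subset_Icc ha hb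
  have hG1 : ∀ s ∈ Set.Ioc (0:ℝ) (1/2), opow ρ (1/2 - s) * G s = X * opow ρ (1/2 - s) := by
    intro s hs
    have := hF.2.2.2 (1/2 - s) (by linarith [hs.2]) (by linarith [hs.1])
    rw [hGdef, shiftG, Set.indicator_of_mem (show s ∈ Set.Ioo (0:ℝ) 1 from ⟨hs.1, by linarith [hs.2]⟩), ← this]
    congr 2
    push_cast; ring
  have hG2 : ∀ s ∈ Set.Ico (1/2 : ℝ) 1, G s * opow ρ (s - 1/2) = opow ρ (s - 1/2) * X := by
    intro s hs
    have := hF.2.2.1 (s - 1/2) (by linarith [hs.1]) (by linarith [hs.2])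
    rw [hGdef, shiftG, Set.indicator_of_mem (show s ∈ Set.Ioo (0:ℝ) 1 from ⟨by linarith [hs.1], hs.2⟩), ← this]
  set R := opow ρ (1/2) with hR
  -- the equation for `V = R U`
  have hV : ∀ t, 0 ≤ t → t ≤ 1 → R * dysonU G t = R - ∫ s in (0:ℝ)..t, R * (dysonU G s * G s) := by
    intro t ht ht1
    rw [← ii_const_mul (hUint 0 t le_rfl ht ht1) ht, dysonU_eq h1 G hG M hGM t ht]
    rw [mul_sub, mul_one]
  have hVint : ∀ a b, 0 ≤ a → a ≤ b → b ≤ 1 →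
      IntervalIntegrable (fun s => R * (dysonU G s * G s)) volume a b :=
    fun a b ha hab hb => (hUint a b ha hab hb).const_mul R
  -- first half
  have step1 : ∀ t ∈ Set.Icc (0:ℝ) (1/2), opow σ t * opow ρ (1/2 - t) - R * dysonU G t = 0 := by
    refine volterra_zero _ 0 (1/2) ((1 + ‖σ‖) * (1 + ‖ρ‖) + ‖R‖ * B) M hM0 ?_ ?_
    · intro t ht
      refine (norm_sub_le _ _).trans (add_le_add ?_ ?_)
      · exact (norm_mul_le _ _).trans (mul_le_mul (norm_opow_le hσ ht.1 (by linarith [ht.2]))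
          (norm_opow_le hρ (by linarith [ht.2]) (by linarith [ht.1])) (norm_nonneg _)
          (by positivity))
      · exact (norm_mul_le _ _).trans (mul_le_mul_of_nonneg_left
          (hB t ⟨ht.1, by linarith [ht.2]⟩) (norm_nonneg _))
    · intro t ht
      have ht1 : t ≤ 1 := by linarith [ht.2]
      have hi := integrable_duhamel hρ hσ X t ht.1 ht1
      have e1 : opow σ t * opow ρ (1/2 - t) =
          R - ∫ s in (0:ℝ)..t, opow σ s * opow ρ (1/2 - s) * G s := by
        have hp : opow ρ t * opow ρ (1/2 - t) = R := by
          rw [opow_mul hρ ht.1 (by linarith [ht.2]), hR]; congr 1; ring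
        have := congrArg (· * opow ρ (1/2 - t)) (duhamel_adj hX h t ht.1)
        simp only [sub_mul, hp] at this
        rw [this, ii_mul_const hi ht.1]
        congr 1
        refine ii_congr_Ioo ht.1 fun s hs => ?_
        rw [mul_assoc, mul_assoc, mul_assoc, hG1 s ⟨hs.1, by linarith [hs.2, ht.2]⟩,
          opow_mul hρ (by linarith [hs.2]) (by linarith [ht.2])]
        congr 3; ring
      have i1 : IntervalIntegrable (fun s => opow σ s * opow ρ (1/2 - s) * G s) volume 0 t := by
        have := hi.mul_const (opow ρ (1/2 - t))
        refine this.congr_ae ?_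
        have hne : ∀ᵐ s : ℝ, s ≠ t := by simp [ae_iff]
        rw [Set.uIoc_of_le ht.1]
        refine (ae_restrict_iff' measurableSet_Ioc).2 ?_
        filter_upwards with s hs
        rw [mul_assoc, mul_assoc, mul_assoc, hG1 s ⟨hs.1, by linarith [hs.2, ht.2]⟩,
          opow_mul hρ (by linarith [hs.2]) (by linarith [ht.2])]
        congr 3; ring
      refine ⟨fun s => R * (dysonU G s * G s) - opow σ s * opow ρ (1/2 - s) * G s, ?_, ?_⟩
      · rw [intervalIntegral.integral_sub (hVint 0 t le_rfl ht.1 ht1) i1, e1, hV t ht.1 ht1]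
        abel
      · intro s hs
        have : R * (dysonU G s * G s) - opow σ s * opow ρ (1/2 - s) * G s =
            -((opow σ s * opow ρ (1/2 - s) - R * dysonU G s) * G s) := by noncomm_ring
        simp only
        rw [this, norm_neg, mul_comm M]
        exact (norm_mul_le _ _).trans (mul_le_mul_of_nonneg_left (hGM s) (norm_nonneg _))
  have half : R * dysonU G (1/2) = opow σ (1/2) := by
    have := step1 (1/2) ⟨by norm_num, le_rfl⟩
    rw [sub_self, opow_zero hρ, mul_one, sub_eq_zero] at this
    exact this.symm
  -- second half
  have step2 : ∀ t ∈ Set.Icc (1/2:ℝ) 1, R * dysonU G t * opow ρ (t - 1/2) - opow σ t = 0 := by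
    refine volterra_zero _ (1/2) 1 (‖R‖ * B * (1 + ‖ρ‖) + (1 + ‖σ‖)) (‖X‖ * (1 + ‖ρ‖))
      (by positivity) ?_ ?_
    · intro t ht
      refine (norm_sub_le _ _).trans (add_le_add ?_
        (norm_opow_le hσ (by linarith [ht.1]) ht.2))
      have hb := hB t ⟨by linarith [ht.1], ht.2⟩
      have hB0 : 0 ≤ B := (norm_nonneg _).trans hb
      exact (norm_mul_le _ _).trans (mul_le_mul ((norm_mul_le _ _).trans
        (mul_le_mul_of_nonneg_left hb (norm_nonneg _)))
        (norm_opow_le hρ (by linarith [ht.1]) (by linarith [ht.2])) (norm_nonneg _)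
        (by positivity))
    · intro t ht
      have ht0 : 0 ≤ t := by linarith [ht.1]
      have hi := integrable_duhamel hρ hσ X t ht0 ht.2
      have hi1 : IntervalIntegrable (fun s => opow σ s * X * opow ρ (t - s)) volume 0 (1/2) :=
        hi.mono_set (by
          rw [Set.uIcc_of_le ht0, Set.uIcc_of_le (by norm_num)]
          exact Set.Icc_subset_Icc le_rfl ht.1)
      have hi2 : IntervalIntegrable (fun s => opow σ s * X * opow ρ (t - s)) volume (1/2) t :=
        hi.mono_set (by
          rw [Set.uIcc_of_le ht0, Set.uIcc_of_le ht.1]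
          exact Set.Icc_subset_Icc (by norm_num) le_rfl)
      have e0 : R * dysonU G t = opow σ (1/2) - ∫ s in (1/2:ℝ)..t, R * (dysonU G s * G s) := by
        rw [← half, hV t ht0 ht.2, hV (1/2) (by norm_num) (by norm_num),
          ← intervalIntegral.integral_add_adjacent_intervals
            (hVint 0 (1/2) le_rfl (by norm_num) (by norm_num))
            (hVint (1/2) t (by norm_num) ht.1 ht.2)]
        abel
      have e1 : opow σ (1/2) * opow ρ (t - 1/2) =
          opow ρ t - ∫ s in (0:ℝ)..(1/2), opow σ s * X * opow ρ (t - s) := by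
        have hp : opow ρ (1/2) * opow ρ (t - 1/2) = opow ρ t := by
          rw [opow_mul hρ (by norm_num) (by linarith [ht.1])]; congr 1; ring
        have := congrArg (· * opow ρ (t - 1/2)) (duhamel_adj hX h (1/2) (by norm_num))
        simp only [sub_mul, hp] at this
        rw [this, ii_mul_const (integrable_duhamel hρ hσ X (1/2) (by norm_num) (by norm_num))
          (by norm_num)]
        congr 1
        refine ii_congr_Ioo (by norm_num) fun s hs => ?_
        rw [mul_assoc, opow_mul hρ (by linarith [hs.2]) (by linarith [ht.1])]
        congr 2; ring
      have e2 := duhamel_adj hX h t ht0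
      rw [← intervalIntegral.integral_add_adjacent_intervals hi1 hi2] at e2
      have e3 : ∀ s ∈ Set.Ioo (1/2) t, R * (dysonU G s * G s) * opow ρ (t - 1/2) =
          R * dysonU G s * opow ρ (s - 1/2) * X * opow ρ (t - s) := by
        intro s hs
        have hp : opow ρ (s - 1/2) * opow ρ (t - s) = opow ρ (t - 1/2) := by
          rw [opow_mul hρ (by linarith [hs.1]) (by linarith [hs.2])]; congr 1; ring
        have hg := hG2 s ⟨hs.1.le, by linarith [hs.2, ht.2]⟩
        calc R * (dysonU G s * G s) * opow ρ (t - 1/2)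
            = R * dysonU G s * (G s * opow ρ (s - 1/2)) * opow ρ (t - s) := by
              rw [← hp]; simp only [mul_assoc]
          _ = _ := by rw [hg]; simp only [mul_assoc]
      refine ⟨fun s => opow σ s * X * opow ρ (t - s) -
        R * (dysonU G s * G s) * opow ρ (t - 1/2), ?_, ?_⟩
      · rw [intervalIntegral.integral_sub hi2
          ((hVint (1/2) t (by norm_num) ht.1 ht.2).mul_const _),
          ← ii_mul_const (hVint (1/2) t (by norm_num) ht.1 ht.2) ht.1, e0, sub_mul, e1, e2]
        abel
      · intro s hs
        simp only
        rw [e3 s hs]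
        have : opow σ s * X * opow ρ (t - s) - R * dysonU G s * opow ρ (s - 1/2) * X * opow ρ (t - s)
          = -((R * dysonU G s * opow ρ (s - 1/2) - opow σ s) * (X * opow ρ (t - s))) := by
          noncomm_ring
        rw [this, norm_neg, mul_comm (‖X‖ * (1 + ‖ρ‖))]
        refine (norm_mul_le _ _).trans (mul_le_mul_of_nonneg_left ((norm_mul_le _ _).trans ?_)
          (norm_nonneg _))
        exact mul_le_mul_of_nonneg_left
          (norm_opow_le hρ (by linarith [hs.2]) (by linarith [hs.1, ht.2])) (norm_nonneg _)
  have fin := step2 1 ⟨by norm_num, le_rfl⟩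
  rw [opow_one hσ, sub_eq_zero] at fin
  rw [← fin, hR]
  norm_num

end B

/-- Let `ρ = exp (-H₀)` and `σ = ρ_X = exp (-(H₀+X))` be finite faithful
weights, with `X` bounded self-adjoint satisfying the Araki condition for `ρ` (with Araki
family `F` and `M = ‖X‖_A` bounding `‖F t‖` on the disc).  Then each term of the Matsubara
(Dyson/expansional) series for `ρ^{-1/2} ρ_X ρ^{-1/2}` has norm at most `M^n / n!`, the
series converges in operator norm, its sum equals `ρ^{-1/2} ρ_X ρ^{-1/2}` (expressed by
multiplying through by `ρ^{1/2}`), the sum is `≤ e^M · I`, and consequently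
`ρ_X ≤ e^M ρ` in the Loewner order. -/
theorem statement4 {ι : Type*} (b : HilbertBasis ι ℂ H) (ρ σ X : H →L[ℂ] H)
    (hρ : IsFiniteWeight b ρ) (hσ : IsFiniteWeight b σ) (hX : IsSelfAdjoint X)
    (F : ℂ → H →L[ℂ] H) (hF : IsArakiFamily ρ X F)
    (M : ℝ) (hM : ∀ t ∈ ball (0:ℂ) (1/2), ‖F t‖ ≤ M)
    (hσX : IsExpPerturbed ρ σ X) :
    (∀ n : ℕ, ‖matsubaraTerm F n‖ ≤ M ^ n / (n.factorial : ℝ)) ∧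
    Summable (matsubaraTerm F) ∧
    opow ρ (1/2) * (∑' n : ℕ, ((-1:ℝ) ^ n) • matsubaraTerm F n) * opow ρ (1/2) = σ ∧
    (∑' n : ℕ, ((-1:ℝ) ^ n) • matsubaraTerm F n) ≤ Real.exp M • (1 : H →L[ℂ] H) ∧
    σ ≤ Real.exp M • ρ := by
  have hρ0 := hρ.1
  have hσ0 := hσ.1
  have h1 : ‖(1 : H →L[ℂ] H)‖ ≤ 1 := ContinuousLinearMap.norm_id_le
  have hG := aesm_shiftG F hF.1
  have hGM := norm_shiftG_le F M hM
  have hJ : ∀ n, matsubaraTerm F n = dysonJ (shiftG F) n 1 := fun n => by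
    rw [matsubara_eq, simplexInt_eq_dysonJ h1 _ hG M hGM n 1 zero_le_one]
  have hn : ∀ n : ℕ, ‖matsubaraTerm F n‖ ≤ M ^ n / (n.factorial : ℝ) := fun n => by
    rw [hJ]
    simpa using norm_dysonJ_le h1 _ M hGM n 1 zero_le_one
  have hS : (∑' n : ℕ, ((-1:ℝ) ^ n) • matsubaraTerm F n) = dysonU (shiftG F) 1 := by
    simp only [dysonU, hJ]
  have hmain : opow ρ (1/2) * (∑' n : ℕ, ((-1:ℝ) ^ n) • matsubaraTerm F n) * opow ρ (1/2) = σ := by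
    rw [hS]
    exact main_identity hρ0 hσ0 hX F hF M hM hσX
  have hnorm : ‖∑' n : ℕ, ((-1:ℝ) ^ n) • matsubaraTerm F n‖ ≤ Real.exp M := by
    refine tsum_of_norm_bounded (f := fun n : ℕ => ((-1:ℝ) ^ n) • matsubaraTerm F n)
      (g := fun n : ℕ => M ^ n / (n.factorial : ℝ)) ?_ fun n => ?_
    · rw [Real.exp_eq_exp_ℝ]
      exact NormedSpace.expSeries_div_hasSum_exp M
    · rw [norm_smul]
      simpa using hn n
  set S := ∑' n : ℕ, ((-1:ℝ) ^ n) • matsubaraTerm F n with hSdef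
  have hRR : opow ρ (1/2) * opow ρ (1/2) = ρ := by
    rw [opow_mul hρ0 (by norm_num) (by norm_num), add_halves, opow_one hρ0]
  have hRstar : star (opow ρ (1/2)) = opow ρ (1/2) := star_opow ρ (1/2)
  set R := opow ρ (1/2) with hR
  have hinj : ∀ T : H →L[ℂ] H, R * T = 0 → T = 0 := by
    intro T hT
    ext x
    apply hρ.2.1
    have : (R * (R * T)) x = 0 := by rw [hT]; simp
    rw [← mul_assoc, hRR] at this
    simpa using this
  have hSsa : IsSelfAdjoint S := by
    have hst : star (R * S * R) = R * S * R := by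
      rw [hmain]; exact (IsSelfAdjoint.of_nonneg hσ0).star_eq
    rw [star_mul, star_mul, hRstar] at hst
    have h0 : R * ((star S - S) * R) = 0 := by
      rw [sub_mul, mul_sub, hst]; simp [mul_assoc]
    have h2 := congrArg star (hinj _ h0)
    rw [star_mul, hRstar, star_zero] at h2
    have h3 := hinj _ h2
    rw [star_sub, star_star, sub_eq_zero] at h3
    exact h3.symm
  have hSle : S ≤ Real.exp M • (1 : H →L[ℂ] H) := by
    refine (IsSelfAdjoint.le_algebraMap_norm_self hSsa).trans ?_
    rw [Algebra.algebraMap_eq_smul_one]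
    exact smul_le_smul_of_nonneg_right hnorm zero_le_one
  refine ⟨hn, Summable.of_norm_bounded (Real.summable_pow_div_factorial M) hn, hmain, hSle, ?_⟩
  have hc := IsSelfAdjoint.conjugate_le_conjugate hSle (c := R) hRstar
  rw [hmain] at hc
  simpa [hRR] using hc
end
end

section
/- Let ρ = exp(−H₀) and σ = ρ_X = exp(−(H₀+X)) be faithful density operators (Tr ρ = Tr σ = 1) on a separable Hilbert space H, with X bounded and σ nearby ρ. Then the trace-norm distance is controlled by the operator norm of the relative Hamiltonian: ‖ρ − σ‖₁ ≤ ‖X‖. Consequently, since ‖X‖ ≤ ‖X‖_A, the trace norm on states is weaker than the Araki norm on perturbations. -/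
open scoped InnerProductSpace ENNReal NNReal
open MeasureTheory Metric Filter

noncomputable section

variable {H : Type*} [NormedAddCommGroup H] [InnerProductSpace ℂ H] [CompleteSpace H]
  [TopologicalSpace.SeparableSpace H]

section helpers

set_option linter.unusedSectionVars false

lemma hasSum_parseval {ι : Type*} (b : HilbertBasis ι ℂ H) (y : H) :
    HasSum (fun i => ‖⟪b i, y⟫_ℂ‖ ^ 2) (‖y‖ ^ 2) := by
  have h := (b.hasSum_inner_mul_inner y y).mapL (Complex.reCLM.restrictScalars ℝ)
  convert! h using 1
  · ext i
    rw [← inner_conj_symm y (b i)]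
    simp only [ContinuousLinearMap.coe_restrictScalars', Complex.reCLM_apply]
    rw [mul_comm, Complex.mul_conj, Complex.ofReal_re, Complex.normSq_eq_norm_sq]
  · simp only [ContinuousLinearMap.coe_restrictScalars', Complex.reCLM_apply]
    exact (inner_self_eq_norm_sq (𝕜 := ℂ) y).symm

/-- finite-rank projection -/
def finProj {ι : Type*} (b : HilbertBasis ι ℂ H) (F : Finset ι) : H →L[ℂ] H :=
  ∑ i ∈ F, InnerProductSpace.rankOne ℂ (b i) (b i)

lemma finProj_apply {ι : Type*} (b : HilbertBasis ι ℂ H) (F : Finset ι) (x : H) :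
    finProj b F x = ∑ i ∈ F, ⟪b i, x⟫_ℂ • b i := by
  simp [finProj, InnerProductSpace.rankOne_apply]

lemma inner_finProj {ι : Type*} (b : HilbertBasis ι ℂ H) (F : Finset ι) (x : H) (i : ι) :
    i ∈ F → ⟪b i, finProj b F x⟫_ℂ = ⟪b i, x⟫_ℂ := by
  intro h
  rw [finProj_apply]
  exact b.orthonormal.inner_right_sum (fun i => ⟪b i, x⟫_ℂ) h

lemma inner_finProj_notMem {ι : Type*} (b : HilbertBasis ι ℂ H) (F : Finset ι) (x : H) (i : ι) :
    i ∉ F → ⟪b i, finProj b F x⟫_ℂ = 0 := by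
  intro h
  rw [finProj_apply, inner_sum]
  refine Finset.sum_eq_zero fun j hj => ?_
  rw [inner_smul_right, b.orthonormal.2 (by rintro rfl; exact h hj), mul_zero]

lemma norm_finProj_le {ι : Type*} (b : HilbertBasis ι ℂ H) (F : Finset ι) : ‖finProj b F‖ ≤ 1 := by
  refine ContinuousLinearMap.opNorm_le_bound _ zero_le_one fun x => ?_
  rw [one_mul]
  refine (sq_le_sq₀ (norm_nonneg _) (norm_nonneg _)).1 ?_
  refine hasSum_le (fun i => ?_) (hasSum_parseval b _) (hasSum_parseval b x)
  by_cases h : i ∈ F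
  · rw [inner_finProj b F x i h]
  · rw [inner_finProj_notMem b F x i h]; simp

lemma norm_sub_finProj_sq {ι : Type*} (b : HilbertBasis ι ℂ H) (F : Finset ι) (y : H) :
    HasSum (fun i : {i // i ∉ F} => ‖⟪b i, y⟫_ℂ‖ ^ 2) (‖y - finProj b F y‖ ^ 2) := by
  have h := hasSum_parseval b (y - finProj b F y)
  have h2 := (F.hasSum_compl_iff (f := fun i => ‖⟪b i, y - finProj b F y⟫_ℂ‖ ^ 2)
    (a := ‖y - finProj b F y‖ ^ 2)).2 (by
    rw [Finset.sum_eq_zero, add_zero]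
    · exact h
    · intro i hi
      rw [inner_sub_right, inner_finProj b F y i hi]; simp)
  convert! h2 using 1
  ext i
  rw [inner_sub_right, inner_finProj_notMem b F y i i.2, sub_zero]

lemma isCompact_finProj {ι : Type*} (b : HilbertBasis ι ℂ H) (F : Finset ι) :
    IsCompactOperator (finProj b F) := by
  classical
  induction F using Finset.induction_on with
  | empty => simpa [finProj] using isCompactOperator_zero
  | insert a s ha ih =>
    have : (finProj b (insert a s) : H → H) =
        (InnerProductSpace.rankOne ℂ (b a) (b a) : H →L[ℂ] H) + finProj b s := by
      ext x; simp [finProj, Finset.sum_insert ha]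
    rw [this]
    refine IsCompactOperator.add ?_ ih
    have h1 : IsCompactOperator (innerSL ℂ (b a) : H →L[ℂ] ℂ) :=
      isCompactOperator_of_locallyCompactSpace_dom (innerSL ℂ (b a) : H →L[ℂ] ℂ)
    have := h1.clm_comp ((ContinuousLinearMap.toSpanSingleton ℂ (b a)))
    convert! this using 1

lemma exists_sqrt {ρ : H →L[ℂ] H} (h : 0 ≤ ρ) : ∃ R : H →L[ℂ] H,
    (∀ x y, ⟪R x, y⟫_ℂ = ⟪x, R y⟫_ℂ) ∧ R * R = ρ := by
  refine ⟨CFC.sqrt ρ, ?_, CFC.sqrt_mul_sqrt_self ρ h⟩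
  have : IsSelfAdjoint (CFC.sqrt ρ) := IsSelfAdjoint.of_nonneg (CFC.sqrt_nonneg ρ)
  exact ContinuousLinearMap.isSelfAdjoint_iff_isSymmetric.1 this

lemma inner_sq {R ρ : H →L[ℂ] H} (hR : ∀ x y, ⟪R x, y⟫_ℂ = ⟪x, R y⟫_ℂ) (h : R * R = ρ) (x : H) :
    (⟪x, ρ x⟫_ℂ).re = ‖R x‖ ^ 2 := by
  rw [← h, mul_apply_eq_comp, ← hR]
  exact inner_self_eq_norm_sq (𝕜 := ℂ) _

lemma isCompact_of_weight {ι : Type*} (b : HilbertBasis ι ℂ H) {ρ : H →L[ℂ] H}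
    (hρ : IsFiniteWeight b ρ) : IsCompactOperator ρ := by
  obtain ⟨R, hR, hRR⟩ := exists_sqrt hρ.1
  have hs : Summable (fun i => ‖R (b i)‖ ^ 2) := by
    convert! hρ.2.2 using 1
    ext i; rw [inner_sq hR hRR]
  have hcomp : IsCompactOperator R := by
    refine isCompactOperator_of_tendsto (l := atTop) (F := fun F => finProj b F * R) ?_
      (Eventually.of_forall fun F => (isCompact_finProj b F).comp_clm R)
    have h0 := (tendsto_tsum_compl_atTop_zero (fun i => ‖R (b i)‖ ^ 2)).sqrt
    rw [Real.sqrt_zero] at h0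
    rw [tendsto_iff_norm_sub_tendsto_zero]
    refine squeeze_zero (fun _ => norm_nonneg _) (fun F => ?_) h0
    refine ContinuousLinearMap.opNorm_le_bound _ (Real.sqrt_nonneg _) fun x => ?_
    refine (sq_le_sq₀ (norm_nonneg _) (by positivity)).1 ?_
    rw [mul_pow, Real.sq_sqrt (tsum_nonneg fun _ => by positivity)]
    have h1 := norm_sub_finProj_sq b F (R x)
    have h2 := (hs.subtype {i | i ∉ F}).hasSum.mul_right (‖x‖ ^ 2)
    rw [sub_apply, norm_sub_rev]
    refine hasSum_le (fun i => ?_) h1 h2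
    rw [← hR]
    simp only [Function.comp]
    rw [← mul_pow]
    gcongr
    exact norm_inner_le_norm _ _
  rw [← hRR]
  exact hcomp.comp_clm R

lemma trace_le {ι κ : Type*} (b : HilbertBasis ι ℂ H) (e : HilbertBasis κ ℂ H) {ρ : H →L[ℂ] H}
    (hρ : IsFiniteWeight b ρ) (K : Finset κ) :
    ∑ k ∈ K, (⟪e k, ρ (e k)⟫_ℂ).re ≤ trElem b ρ := by
  obtain ⟨R, hR, hRR⟩ := exists_sqrt hρ.1
  have h1 : HasSum (fun i => ∑ k ∈ K, ‖⟪b i, R (e k)⟫_ℂ‖ ^ 2) (∑ k ∈ K, ‖R (e k)‖ ^ 2) :=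
    hasSum_sum fun k _ => hasSum_parseval b (R (e k))
  simp only [inner_sq hR hRR]
  refine hasSum_le (fun i => ?_) h1 hρ.2.2.hasSum
  rw [inner_sq hR hRR]
  refine le_trans (le_of_eq ?_) (e.orthonormal.sum_inner_products_le (x := R (b i)) (s := K))
  refine Finset.sum_congr rfl fun k _ => ?_
  rw [← hR, norm_inner_symm]

lemma cfc_eigen {ρ : H →L[ℂ] H} (hρ : IsSelfAdjoint ρ) {l : ℝ} {e : H} (he : e ≠ 0)
    (h : ρ e = (l : ℂ) • e) (f : ℝ → ℝ) (hf : Continuous f) :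
    cfc f ρ e = ((f l : ℝ) : ℂ) • e := by
  have hl : l ∈ spectrum ℝ ρ := by
    rw [spectrum.mem_iff]
    intro hu
    have hinj : Function.Injective (algebraMap ℝ (H →L[ℂ] H) l - ρ : H →L[ℂ] H) := by
      obtain ⟨u, hu⟩ := hu
      rw [← hu]
      intro x y hxy
      have := congrArg (fun z => (↑u⁻¹ : H →L[ℂ] H) z) hxy
      simpa only [← mul_apply_eq_comp, Units.inv_mul, one_apply_eq_self] using this
    apply he
    apply hinj
    rw [map_zero, sub_apply, h, Algebra.algebraMap_eq_smul_one]
    simp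
  rw [cfc_apply f ρ hρ hf.continuousOn]
  suffices ∀ g : C(spectrum ℝ ρ, ℝ), cfcHom hρ g e = ((g ⟨l, hl⟩ : ℝ) : ℂ) • e from this _
  intro g
  induction g using ContinuousMap.induction_on_of_compact with
  | const r =>
    have : (ContinuousMap.const (spectrum ℝ ρ) r) = algebraMap ℝ C(spectrum ℝ ρ, ℝ) r := rfl
    rw [this, AlgHomClass.commutes, Algebra.algebraMap_eq_smul_one]
    simp
  | id => rw [cfcHom_id hρ, h]; rfl
  | star_id =>
    have : star ((ContinuousMap.id ℝ).restrict (spectrum ℝ ρ)) =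
      (ContinuousMap.id ℝ).restrict (spectrum ℝ ρ) := by ext; simp
    rw [this, cfcHom_id hρ, h]; rfl
  | add f g hf hg => rw [map_add, add_apply, hf, hg]; simp [add_smul]
  | mul f g hf hg =>
    rw [map_mul, mul_apply_eq_comp, hg, map_smul, hf, smul_smul, mul_comm]; simp
  | frequently f hF =>
    have hcl : IsClosed {g : C(spectrum ℝ ρ, ℝ) | cfcHom hρ g e = ((g ⟨l, hl⟩ : ℝ) : ℂ) • e} := by
      refine isClosed_eq ?_ ?_
      · exact ((ContinuousLinearMap.apply ℂ H e).continuous).comp (cfcHom_continuous hρ)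
      · exact (Complex.continuous_ofReal.comp (continuous_eval_const _)).smul
          continuous_const
    exact hcl.mem_of_frequently_of_tendsto hF tendsto_id

open scoped ComplexOrder in
lemma exists_eigenbasis.{u} {H : Type u} [NormedAddCommGroup H] [InnerProductSpace ℂ H]
    [CompleteSpace H] {ρ : H →L[ℂ] H} (h0 : 0 ≤ ρ) (hc : IsCompactOperator ρ) :
    ∃ (κ : Type u) (e : HilbertBasis κ ℂ H) (l : κ → ℝ), (∀ k, 0 ≤ l k) ∧
      ∀ k, ρ (e k) = (l k : ℂ) • e k := by
  have hsa : IsSelfAdjoint ρ := IsSelfAdjoint.of_nonneg h0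
  have hsym := ContinuousLinearMap.isSelfAdjoint_iff_isSymmetric.1 hsa
  have hof := hsym.orthogonalFamily_eigenspaces
  have hbot := ContinuousLinearMap.orthogonalComplement_iSup_eigenspaces_eq_bot hc hsym
  have hcompl : ∀ μ : ℂ, CompleteSpace (Module.End.eigenspace (ρ : Module.End ℂ H) μ) := by
    intro μ
    have : IsClosed (Module.End.eigenspace (ρ : Module.End ℂ H) μ : Set H) := by
      have : (Module.End.eigenspace (ρ : Module.End ℂ H) μ : Set H) = {x | ρ x = μ • x} := by
        ext x; simp
      rw [this]
      exact isClosed_eq ρ.continuous (continuous_const_smul μ)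
    exact this.completeSpace_coe
  choose w B hB using fun μ : ℂ =>
    exists_hilbertBasis ℂ (Module.End.eigenspace (ρ : Module.End ℂ H) μ)
  have hon := hof.orthonormal_sigma_orthonormal (fun μ => (B μ).orthonormal)
  have hsp : (Submodule.span ℂ (Set.range fun a : Σ μ : ℂ, w μ =>
      (Module.End.eigenspace (ρ : Module.End ℂ H) a.1).subtypeₗᵢ (B a.1 a.2)))ᗮ = ⊥ := by
    rw [eq_bot_iff, ← hbot]
    intro x hx
    rw [Submodule.mem_orthogonal'] at hx
    rw [← Submodule.iInf_orthogonal] 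
    rw [Submodule.mem_iInf]
    intro μ
    rw [Submodule.mem_orthogonal']
    intro u hu
    have h1 := ((B μ).hasSum_repr ⟨u, hu⟩).mapL
      ((innerSL ℂ x).comp (Module.End.eigenspace (ρ : Module.End ℂ H) μ).subtypeL)
    have h2 : ∀ i, ((innerSL ℂ x).comp (Module.End.eigenspace (ρ : Module.End ℂ H) μ).subtypeL)
        ((B μ).repr ⟨u, hu⟩ i • (B μ) i) = 0 := by
      intro i
      have := hx _ (Submodule.subset_span ⟨⟨μ, i⟩, rfl⟩)
      simp only [map_smul, smul_eq_mul]
      exact mul_eq_zero_of_right _ this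
    simp only [h2] at h1
    exact h1.unique hasSum_zero
  let e := HilbertBasis.mkOfOrthogonalEqBot hon hsp
  have he : ∀ a, e a = (Module.End.eigenspace (ρ : Module.End ℂ H) a.1).subtypeₗᵢ (B a.1 a.2) := by
    intro a
    simp only [e, HilbertBasis.coe_mkOfOrthogonalEqBot]
  have heig : ∀ a, ρ (e a) = a.1 • e a := by
    intro a
    rw [he]
    exact Module.End.mem_eigenspace_iff.1 (B a.1 a.2).2
  have hnn : ∀ a : Σ μ : ℂ, w μ, 0 ≤ a.1 := by
    intro a
    have hp := (ContinuousLinearMap.nonneg_iff_isPositive ρ).1 h0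
    have := hp.inner_nonneg_right (e a)
    rw [heig, inner_smul_right, inner_self_eq_norm_sq_to_K, e.orthonormal.1 a] at this
    simpa using this
  refine ⟨Σ μ : ℂ, w μ, e, fun a : (Σ μ : ℂ, w μ) => a.1.re, fun a => (Complex.nonneg_iff.1 (hnn a)).1, fun a => ?_⟩
  rw [heig]
  congr 1
  exact Complex.ext rfl (Complex.nonneg_iff.1 (hnn a)).2.symm

lemma cs_bound {κ : Type*} (f : HilbertBasis κ ℂ H) (J : Finset κ) (x y : H) :
    ∑ j ∈ J, ‖⟪x, f j⟫_ℂ‖ * ‖⟪f j, y⟫_ℂ‖ ≤ ‖x‖ * ‖y‖ := by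
  refine (Real.sum_mul_le_sqrt_mul_sqrt J _ _).trans ?_
  refine mul_le_mul ?_ ?_ (Real.sqrt_nonneg _) (norm_nonneg _)
  · rw [Real.sqrt_le_left (norm_nonneg _)]
    simp only [norm_inner_symm x]
    exact f.orthonormal.sum_inner_products_le x
  · rw [Real.sqrt_le_left (norm_nonneg _)]
    exact f.orthonormal.sum_inner_products_le y

lemma core_bound {κ κ' : Type*} (e : HilbertBasis κ ℂ H) (f : HilbertBasis κ' ℂ H)
    (X U : H →L[ℂ] H) (hX : ∀ x y, ⟪X x, y⟫_ℂ = ⟪x, X y⟫_ℂ) (hU : ‖U‖ ≤ 1)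
    (a l : κ → ℝ) (c m : κ' → ℝ) (s : ℝ) (hs0 : 0 ≤ s) (hs1 : s ≤ 1)
    (ha : ∀ k, 0 ≤ a k) (hc : ∀ k, 0 ≤ c k) (hl : ∀ k, 0 ≤ l k) (hm : ∀ k, 0 ≤ m k)
    (hac : ∀ k j, a k * c j ≤ (1 - s) * l k + s * m j) (K : Finset κ) (J : Finset κ')
    (hlK : ∑ k ∈ K, l k ≤ 1) (hmJ : ∑ j ∈ J, m j ≤ 1) :
    ‖∑ k ∈ K, ∑ j ∈ J, (a k : ℂ) * c j * ⟪X (e k), f j⟫_ℂ * ⟪f j, U (e k)⟫_ℂ‖ ≤ ‖X‖ := by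
  have h1 : ∀ k, ∑ j ∈ J, ‖⟪X (e k), f j⟫_ℂ‖ * ‖⟪f j, U (e k)⟫_ℂ‖ ≤ ‖X‖ := by
    intro k
    refine (cs_bound f J _ _).trans ?_
    have h2 := X.le_opNorm (e k)
    have h3 := U.le_of_opNorm_le hU (e k)
    rw [e.orthonormal.1 k] at h2 h3
    calc _ ≤ (‖X‖ * 1) * (1 * 1) := by gcongr
      _ = _ := by ring
  have h1' : ∀ j, ∑ k ∈ K, ‖⟪X (e k), f j⟫_ℂ‖ * ‖⟪f j, U (e k)⟫_ℂ‖ ≤ ‖X‖ := by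
    intro j
    have := cs_bound e K (X (f j)) (ContinuousLinearMap.adjoint U (f j))
    have h2 := X.le_opNorm (f j)
    have h3 := (ContinuousLinearMap.adjoint U).le_of_opNorm_le (by simpa using hU) (f j)
    rw [f.orthonormal.1 j] at h2 h3
    calc _ = ∑ k ∈ K, ‖⟪X (f j), e k⟫_ℂ‖ * ‖⟪e k, ContinuousLinearMap.adjoint U (f j)⟫_ℂ‖ := by
          refine Finset.sum_congr rfl fun k _ => ?_
          rw [ContinuousLinearMap.adjoint_inner_right, norm_inner_symm (U (e k)), hX, norm_inner_symm]
      _ ≤ _ := this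
      _ ≤ (‖X‖ * 1) * (1 * 1) := by gcongr
      _ = _ := by ring
  set t : κ → κ' → ℝ := fun k j => ‖⟪X (e k), f j⟫_ℂ‖ * ‖⟪f j, U (e k)⟫_ℂ‖ with ht
  have ht0 : ∀ k j, 0 ≤ t k j := fun k j => by positivity
  have hs1' : 0 ≤ 1 - s := by linarith
  calc _ ≤ ∑ k ∈ K, ∑ j ∈ J, ((1 - s) * l k + s * m j) * t k j := by
        refine (norm_sum_le _ _).trans (Finset.sum_le_sum fun k _ => ?_)
        refine (norm_sum_le _ _).trans (Finset.sum_le_sum fun j _ => ?_)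
        rw [norm_mul, norm_mul, norm_mul, Complex.norm_real, Complex.norm_real,
          Real.norm_of_nonneg (ha k), Real.norm_of_nonneg (hc j), mul_assoc]
        exact mul_le_mul_of_nonneg_right (hac k j) (ht0 k j)
    _ = (1 - s) * ∑ k ∈ K, l k * ∑ j ∈ J, t k j + s * ∑ j ∈ J, m j * ∑ k ∈ K, t k j := by
        simp only [add_mul, Finset.sum_add_distrib, Finset.mul_sum]
        congr 1
        · simp only [mul_assoc]
        · rw [Finset.sum_comm]; simp only [mul_assoc]
    _ ≤ (1 - s) * ∑ k ∈ K, l k * ‖X‖ + s * ∑ j ∈ J, m j * ‖X‖ := by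
        gcongr with k _ j _
        · exact hl k
        · exact h1 k
        · exact hm j
        · exact h1' j
    _ = (1 - s) * ((∑ k ∈ K, l k) * ‖X‖) + s * ((∑ j ∈ J, m j) * ‖X‖) := by
        simp only [Finset.sum_mul]
    _ ≤ (1 - s) * (1 * ‖X‖) + s * (1 * ‖X‖) := by gcongr
    _ = ‖X‖ := by ring

lemma hasSum_eigen {κ : Type*} (e : HilbertBasis κ ℂ H) (A : H →L[ℂ] H) (a : κ → ℝ)
    (hA : ∀ x y, ⟪A x, y⟫_ℂ = ⟪x, A y⟫_ℂ) (he : ∀ k, A (e k) = (a k : ℂ) • e k) (x y : H) :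
    HasSum (fun k => (a k : ℂ) * ⟪x, e k⟫_ℂ * ⟪e k, y⟫_ℂ) ⟪x, A y⟫_ℂ := by
  convert! e.hasSum_inner_mul_inner x (A y) using 1
  ext k
  rw [← hA, he, inner_smul_left, Complex.conj_ofReal]
  ring

lemma sum_bound {ι κ κ' : Type*} (b : HilbertBasis ι ℂ H) (e : HilbertBasis κ ℂ H)
    (f : HilbertBasis κ' ℂ H)
    (X S A B : H →L[ℂ] H) (hX : ∀ x y, ⟪X x, y⟫_ℂ = ⟪x, X y⟫_ℂ)
    (hS : ∀ x y, ⟪S x, y⟫_ℂ = ⟪x, S y⟫_ℂ)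
    (hA : ∀ x y, ⟪A x, y⟫_ℂ = ⟪x, A y⟫_ℂ)
    (hB : ∀ x y, ⟪B x, y⟫_ℂ = ⟪x, B y⟫_ℂ) (hSn : ‖S‖ ≤ 1)
    (a l : κ → ℝ) (c m : κ' → ℝ) (s : ℝ) (hs0 : 0 ≤ s) (hs1 : s ≤ 1)
    (ha : ∀ k, 0 ≤ a k) (hc : ∀ k, 0 ≤ c k) (hl : ∀ k, 0 ≤ l k) (hm : ∀ k, 0 ≤ m k)
    (hAe : ∀ k, A (e k) = (a k : ℂ) • e k) (hBf : ∀ k, B (f k) = (c k : ℂ) • f k)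
    (hac : ∀ k j, a k * c j ≤ (1 - s) * l k + s * m j)
    (hlK : ∀ K : Finset κ, ∑ k ∈ K, l k ≤ 1) (hmJ : ∀ J : Finset κ', ∑ j ∈ J, m j ≤ 1)
    (F : Finset ι) :
    ‖∑ i ∈ F, ⟪S (b i), (A * X * B) (b i)⟫_ℂ‖ ≤ ‖X‖ := by
  have h1 : HasSum (fun k => ∑ i ∈ F, (a k : ℂ) * ⟪S (b i), e k⟫_ℂ * ⟪e k, X (B (b i))⟫_ℂ)
      (∑ i ∈ F, ⟪S (b i), (A * X * B) (b i)⟫_ℂ) :=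
    hasSum_sum fun i _ => hasSum_eigen e A a hA hAe (S (b i)) (X (B (b i)))
  refine le_of_tendsto h1.norm (Eventually.of_forall fun K => ?_)
  have h2 : HasSum (fun j => ∑ k ∈ K, ∑ i ∈ F, (a k : ℂ) * ⟪S (b i), e k⟫_ℂ *
      ((c j : ℂ) * ⟪X (e k), f j⟫_ℂ * ⟪f j, b i⟫_ℂ))
      (∑ k ∈ K, ∑ i ∈ F, (a k : ℂ) * ⟪S (b i), e k⟫_ℂ * ⟪e k, X (B (b i))⟫_ℂ) := by
    refine hasSum_sum fun k _ => hasSum_sum fun i _ => ?_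
    rw [← hX]
    exact (hasSum_eigen f B c hB hBf (X (e k)) (b i)).mul_left _
  refine le_of_tendsto h2.norm (Eventually.of_forall fun J => ?_)
  have hU : ‖finProj b F * S‖ ≤ 1 :=
    (norm_mul_le _ _).trans (mul_le_one₀ (norm_finProj_le b F) (norm_nonneg _) hSn)
  refine le_trans (le_of_eq ?_) (core_bound e f X (finProj b F * S) hX hU a l c m s hs0 hs1 ha hc hl hm hac
    K J (hlK K) (hmJ J))
  congr 1
  rw [Finset.sum_comm]
  refine Finset.sum_congr rfl fun k _ => Finset.sum_congr rfl fun j _ => ?_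
  rw [mul_apply_eq_comp, finProj_apply, inner_sum, Finset.mul_sum]
  refine Finset.sum_congr rfl fun i _ => ?_
  rw [inner_smul_right, hS]
  ring

lemma cfc_symm (f : ℝ → ℝ) (ρ : H →L[ℂ] H) (x y : H) : ⟪cfc f ρ x, y⟫_ℂ = ⟪x, cfc f ρ y⟫_ℂ :=
  ContinuousLinearMap.isSelfAdjoint_iff_isSymmetric.1 (cfc_predicate f ρ) x y

lemma duhamel_bound {ι : Type*} (b : HilbertBasis ι ℂ H) (ρ σ X S : H →L[ℂ] H)
    (hρ : IsFiniteWeight b ρ) (hσ : IsFiniteWeight b σ)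
    (hρtr : trElem b ρ = 1) (hσtr : trElem b σ = 1)
    (hX : IsSelfAdjoint X) (hσX : IsExpPerturbed ρ σ X)
    (hS : ∀ x y, ⟪S x, y⟫_ℂ = ⟪x, S y⟫_ℂ) (hSn : ‖S‖ ≤ 1) (F : Finset ι) :
    ‖∑ i ∈ F, ⟪S (b i), (ρ - σ) (b i)⟫_ℂ‖ ≤ ‖X‖ := by
  obtain ⟨κ, e, l, hl, he⟩ := exists_eigenbasis hρ.1 (isCompact_of_weight b hρ)
  obtain ⟨κ', f, m, hm, hf⟩ := exists_eigenbasis hσ.1 (isCompact_of_weight b hσ)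
  have hlK : ∀ K : Finset κ, ∑ k ∈ K, l k ≤ 1 := by
    intro K
    rw [← hρtr]
    refine le_trans (le_of_eq ?_) (trace_le b e hρ K)
    refine Finset.sum_congr rfl fun k _ => ?_
    rw [he, inner_smul_right, inner_self_eq_norm_sq_to_K, e.orthonormal.1 k]
    simp
  have hmJ : ∀ K : Finset κ', ∑ k ∈ K, m k ≤ 1 := by
    intro K
    rw [← hσtr]
    refine le_trans (le_of_eq ?_) (trace_le b f hσ K)
    refine Finset.sum_congr rfl fun k _ => ?_
    rw [hf, inner_smul_right, inner_self_eq_norm_sq_to_K, f.orthonormal.1 k]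
    simp
  have hρs : IsSelfAdjoint ρ := IsSelfAdjoint.of_nonneg hρ.1
  have hσs : IsSelfAdjoint σ := IsSelfAdjoint.of_nonneg hσ.1
  have hD : ρ - σ = ∫ s in (0:ℝ)..1, opow ρ (1 - s) * X * opow σ s := by
    have h := hσX 1 zero_le_one
    have h1 : opow σ 1 = σ := by simp only [opow, Real.rpow_one]; exact cfc_id' ℝ σ
    have h2 : opow ρ 1 = ρ := by simp only [opow, Real.rpow_one]; exact cfc_id' ℝ ρ
    rw [h1, h2] at h
    conv_lhs => rw [h]
    abel
  by_cases hint : IntervalIntegrable (fun s => opow ρ (1 - s) * X * opow σ s) volume 0 1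
  · let L : (H →L[ℂ] H) →L[ℂ] ℂ :=
      ∑ i ∈ F, (innerSL ℂ (S (b i))).comp (ContinuousLinearMap.apply ℂ H (b i))
    have hL : ∀ T, L T = ∑ i ∈ F, ⟪S (b i), T (b i)⟫_ℂ := by
      intro T
      simp [L]
    rw [← hL, hD, ← L.intervalIntegral_comp_comm hint]
    refine (intervalIntegral.norm_integral_le_of_norm_le_const (C := ‖X‖) fun s hs => ?_).trans
      (by simp)
    rw [Set.uIoc_of_le zero_le_one] at hs
    rw [hL]
    refine sum_bound b e f X S _ _ (ContinuousLinearMap.isSelfAdjoint_iff_isSymmetric.1 hX) hS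
      (cfc_symm _ _) (cfc_symm _ _) hSn (fun k => l k ^ (1 - s)) l (fun j => m j ^ s) m s hs.1.le hs.2
      (fun k => Real.rpow_nonneg (hl k) _) (fun k => Real.rpow_nonneg (hm k) _) hl hm
      (fun k => ?_) (fun k => ?_) (fun k j => ?_) hlK hmJ F
    · exact cfc_eigen hρs (e.orthonormal.ne_zero k) (he k) _
        (Real.continuous_rpow_const (by linarith [hs.2]))
    · exact cfc_eigen hσs (f.orthonormal.ne_zero k) (hf k) _
        (Real.continuous_rpow_const hs.1.le)
    · exact Real.geom_mean_le_arith_mean2_weighted (by linarith [hs.2]) hs.1.le (hl k) (hm j)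
        (by ring)
  · rw [hD, intervalIntegral.integral_undef hint]
    simp

lemma trace_bound {ι : Type*} (b : HilbertBasis ι ℂ H) (ρ σ X : H →L[ℂ] H)
    (hρ : IsFiniteWeight b ρ) (hσ : IsFiniteWeight b σ)
    (hρtr : trElem b ρ = 1) (hσtr : trElem b σ = 1)
    (hX : IsSelfAdjoint X) (hσX : IsExpPerturbed ρ σ X) :
    trElem b (cfc Real.sqrt ((ρ - σ) * (ρ - σ))) ≤ ‖X‖ := by
  set D := ρ - σ with hD
  have hDs : IsSelfAdjoint D := (IsSelfAdjoint.of_nonneg hρ.1).sub (IsSelfAdjoint.of_nonneg hσ.1)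
  have habs : cfc Real.sqrt (D * D) = cfc (fun x : ℝ => |x|) D := by
    have : D * D = cfc (fun x : ℝ => x ^ 2) D := by
      rw [cfc_pow_id (R := ℝ) D 2, sq]
    rw [this, ← cfc_comp' Real.sqrt (fun x : ℝ => x ^ 2) D]
    simp only [Real.sqrt_sq_eq_abs]
  rw [habs]
  refine tsum_le_of_sum_le' (norm_nonneg _) fun F => ?_
  refine le_of_forall_pos_le_add fun δ hδ => ?_
  set ε : ℝ := δ / (F.card + 1) with hε
  have hε0 : 0 < ε := by positivity
  have hcont : Continuous (fun x : ℝ => x / (|x| + ε)) :=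
    continuous_id.div (by fun_prop) fun x => by positivity
  set S := cfc (fun x : ℝ => x / (|x| + ε)) D with hSdef
  have hSn : ‖S‖ ≤ 1 := by
    refine norm_cfc_le zero_le_one fun x _ => ?_
    rw [Real.norm_eq_abs, abs_div, abs_of_pos (show 0 < |x| + ε by positivity)]
    exact div_le_one_of_le₀ (by linarith) (by positivity)
  have hle : cfc (fun x : ℝ => |x|) D ≤ S * D + algebraMap ℝ (H →L[ℂ] H) ε := by
    have h1 : S * D + algebraMap ℝ (H →L[ℂ] H) ε = cfc (fun x : ℝ => x / (|x| + ε) * x + ε) D := by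
      rw [cfc_add D (fun x : ℝ => x / (|x| + ε) * x) (fun _ => ε)
        (by exact (hcont.mul continuous_id).continuousOn) (by fun_prop),
        cfc_mul (fun x : ℝ => x / (|x| + ε)) (fun x => x) D hcont.continuousOn (by fun_prop),
        cfc_id' ℝ D, cfc_const ε D]
    rw [h1]
    refine cfc_mono (fun x _ => ?_) (by fun_prop)
      (by exact ((hcont.mul continuous_id).add continuous_const).continuousOn)
    have hp : 0 < |x| + ε := by positivity
    have h2 : x / (|x| + ε) * x = |x| * |x| / (|x| + ε) := by rw [abs_mul_abs_self]; ring
    rw [h2, div_add' _ _ _ hp.ne', le_div_iff₀ hp]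
    nlinarith [abs_nonneg x, sq_nonneg ε]
  have hterm : ∀ i, (⟪b i, cfc (fun x : ℝ => |x|) D (b i)⟫_ℂ).re ≤
      (⟪S (b i), D (b i)⟫_ℂ).re + ε := by
    intro i
    have h1 := ((ContinuousLinearMap.le_def _ _).1 hle).re_inner_nonneg_right (b i)
    have h2 : ⟪b i, (algebraMap ℝ (H →L[ℂ] H) ε) (b i)⟫_ℂ = (ε : ℂ) := by
      have : (algebraMap ℝ (H →L[ℂ] H) ε) (b i) = (ε : ℂ) • b i := by
        rw [Algebra.algebraMap_eq_smul_one]; simp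
      rw [this, inner_smul_right, inner_self_eq_norm_sq_to_K, b.orthonormal.1 i]; simp
    rw [sub_apply, inner_sub_right, add_apply, inner_add_right, h2, mul_apply_eq_comp] at h1
    rw [cfc_symm]
    simp only [RCLike.re_to_complex, Complex.sub_re, Complex.add_re, Complex.ofReal_re] at h1
    linarith
  have hmain := duhamel_bound b ρ σ X S hρ hσ hρtr hσtr hX hσX (cfc_symm _ _) hSn F
  calc _ ≤ ∑ i ∈ F, ((⟪S (b i), D (b i)⟫_ℂ).re + ε) := Finset.sum_le_sum fun i _ => hterm i
    _ = (∑ i ∈ F, ⟪S (b i), D (b i)⟫_ℂ).re + F.card * ε := by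
        rw [Finset.sum_add_distrib, Complex.re_sum]; simp
    _ ≤ ‖X‖ + δ := by
        refine add_le_add ((Complex.re_le_norm _).trans hmain) ?_
        rw [hε, mul_div_assoc', div_le_iff₀ (by positivity)]
        nlinarith

lemma norm_le_araki (ρ X : H →L[ℂ] H) (hρ : IsSelfAdjoint ρ) (h : SatisfiesAraki ρ X) :
    ‖X‖ ≤ arakiNorm ρ X := by
  refine le_csInf ?_ ?_
  · obtain ⟨F, hF⟩ := h
    obtain ⟨M, hM⟩ := hF.2.1
    exact ⟨max M 0, le_max_right _ _, F, hF, fun t ht => (hM t ht).trans (le_max_left _ _)⟩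
  · rintro M ⟨-, F, hF, hM⟩
    have h0 : opow ρ 0 = 1 := by simp only [opow, Real.rpow_zero]; exact cfc_const_one ℝ ρ
    have h1 := hF.2.2.1 0 le_rfl (by norm_num)
    rw [h0, mul_one, one_mul] at h1
    rw [← h1]
    exact hM _ (by simp)

end helpers

/-- Let `ρ = exp (-H₀)` and `σ = ρ_X = exp (-(H₀+X))` be faithful
density operators (`Tr ρ = Tr σ = 1`) with `X` bounded (self-adjoint) and `σ` nearby `ρ`.
Then the trace-norm distance is controlled by the operator norm of the relative
Hamiltonian, `‖ρ - σ‖₁ = Tr |ρ - σ| ≤ ‖X‖`; consequently, since `‖X‖ ≤ ‖X‖_A`, the trace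
norm on states is weaker than the Araki norm on perturbations. -/
theorem statement12 {ι : Type*} (b : HilbertBasis ι ℂ H) (ρ σ X : H →L[ℂ] H)
    (hρ : IsFiniteWeight b ρ) (hσ : IsFiniteWeight b σ)
    (hρtr : trElem b ρ = 1) (hσtr : trElem b σ = 1)
    (hX : IsSelfAdjoint X) (hσX : IsExpPerturbed ρ σ X) (hnear : IsNearby σ ρ) :
    trElem b (cfc Real.sqrt ((ρ - σ) * (ρ - σ))) ≤ ‖X‖ ∧
    (SatisfiesAraki ρ X → ‖X‖ ≤ arakiNorm ρ X ∧
      trElem b (cfc Real.sqrt ((ρ - σ) * (ρ - σ))) ≤ arakiNorm ρ X) := by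
  have h1 := trace_bound b ρ σ X hρ hσ hρtr hσtr hX hσX
  refine ⟨h1, fun h => ?_⟩
  have h2 := norm_le_araki ρ X (IsSelfAdjoint.of_nonneg hρ.1) h
  exact ⟨h2, h1.trans h2⟩
end
end
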